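/- arXiv:2402.15545 — 5 statements merged into one kernel-verified Lean document; each statement's English description precedes it below -/
import Mathlib

section
/- Let ℓ > 0, T > 0, and let u, v, q satisfy the hypotheses and conclusions of the Lagrangian system as above (in particular u_ξ = ½ q sin v everywhere). Then the pointwise conservation law ∂_t[ ( u² cos²(v/2) + ℓ² sin²(v/2) ) q ] + ∂_ξ[ 2 ℓ² u P − ⅓ u³ ] = 0 holds on [0,T] × ℝ. Consequently, if (u² cos²(v/2) + ℓ² sin²(v/2)) q is integrable in ξ uniformly in t and the flux 2ℓ²uP − ⅓u³ tends to the same limits as ξ → ±∞, then ∫_ℝ ( u² cos²(v/2) + ℓ² sin²(v/2) ) q dξ is constant in time. -/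
/-! Energy conservation for the regularised Burgers equation in Lagrangian coordinates.

**Pointwise law.** With `Y` a primitive of `c = q cos² (v/2)`, the kernel is
`exp (-|Y ξ' - Y ξ| / ℓ) q sin² (v/2)`, so each of its half-line integrals factorises and can be
differentiated in `ξ` (`hasDerivAt_half_integrals`). The local terms cancel in the sum, giving
`P_ξ = c P_x` (`hasDerivAt_lagP`). Hence the flux `2ℓ²uP - u³/3` has derivative
`2ℓ²u_ξ P + 2ℓ²u c P_x - u² u_ξ`, with `u_ξ = ½ q sin v`, and a computation with the half-angle
formulas shows that the density has the opposite time derivative (`hasDerivAt_energy_density`).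

**Conservation.** On `[-N, N]` the energy changes by the time integral of the flux difference at
`±N`, which tends to zero pointwise in time; dominated convergence concludes
(`integral_eq_of_conservation_law`). This needs a bound of the flux uniform in time and position.
`P` and `P_x` are bounded by the mass of the function dominating `q sin² (v/2)`. The initial `u` is
bounded because the flux at time `0` has finite limits and its cubic term dominates
(`bounded_of_flux_limits`), and then `u` stays bounded because `u_t = -ℓ² P_x` is bounded.
-/


open MeasureTheory Set Filter

/-- The integrand of the Lagrangian expressions (4.14)–(4.15) for the nonlocal terms of the
regularised Burgers equation. -/
noncomputable def lagK (ℓ : ℝ) (v q : ℝ → ℝ) (ξ ξ' : ℝ) : ℝ :=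
  Real.exp (-(1 / ℓ) * |∫ s in ξ..ξ', q s * Real.cos (v s / 2) ^ 2|) *
    (q ξ' * Real.sin (v ξ' / 2) ^ 2)

/-- The nonlocal term `P` in Lagrangian variables (formula (4.14)). -/
noncomputable def lagP (ℓ : ℝ) (v q : ℝ → ℝ) (ξ : ℝ) : ℝ :=
  (1 / (4 * ℓ)) * ∫ ξ' : ℝ, lagK ℓ v q ξ ξ'

/-- The nonlocal term `P_x` in Lagrangian variables (formula (4.15)). -/
noncomputable def lagPx (ℓ : ℝ) (v q : ℝ → ℝ) (ξ : ℝ) : ℝ :=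
  (1 / (4 * ℓ ^ 2)) *
    ((∫ ξ' in Set.Ioi ξ, lagK ℓ v q ξ ξ') - ∫ ξ' in Set.Iio ξ, lagK ℓ v q ξ ξ')

/-! ### The nonlocal terms at a fixed time -/

section FixedTime

variable {ℓ : ℝ} {v q : ℝ → ℝ}

lemma lagK_nonneg (hq : ∀ x, 0 ≤ q x) (ξ ξ' : ℝ) : 0 ≤ lagK ℓ v q ξ ξ' :=
  mul_nonneg (Real.exp_pos _).le (mul_nonneg (hq _) (sq_nonneg _))

lemma lagK_le (hℓ : 0 < ℓ) (hq : ∀ x, 0 ≤ q x) (ξ ξ' : ℝ) :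
    lagK ℓ v q ξ ξ' ≤ q ξ' * Real.sin (v ξ' / 2) ^ 2 := by
  unfold lagK
  have h1 : Real.exp (-(1 / ℓ) * |∫ s in ξ..ξ', q s * Real.cos (v s / 2) ^ 2|) ≤ 1 := by
    rw [Real.exp_le_one_iff, neg_mul, neg_nonpos]
    positivity
  have h2 : 0 ≤ q ξ' * Real.sin (v ξ' / 2) ^ 2 := mul_nonneg (hq _) (sq_nonneg _)
  nlinarith

lemma norm_lagK_le (hℓ : 0 < ℓ) (hq : ∀ x, 0 ≤ q x) {g : ℝ → ℝ}
    (hle : ∀ x, q x * Real.sin (v x / 2) ^ 2 ≤ g x) (ξ ξ' : ℝ) :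
    ‖lagK ℓ v q ξ ξ'‖ ≤ g ξ' := by
  rw [Real.norm_of_nonneg (lagK_nonneg hq _ _)]
  exact (lagK_le hℓ hq _ _).trans (hle _)

lemma continuous_lagK (hv : Continuous v) (hc : Continuous q) (ξ : ℝ) :
    Continuous (lagK ℓ v q ξ) := by
  have : Continuous fun ξ' => ∫ s in ξ..ξ', q s * Real.cos (v s / 2) ^ 2 :=
    intervalIntegral.continuous_primitive
      (fun a b => Continuous.intervalIntegrable (by fun_prop) a b) ξ
  unfold lagK
  fun_prop

lemma integrable_lagK (hℓ : 0 < ℓ) (hv : Continuous v) (hc : Continuous q)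
    (hq : ∀ x, 0 ≤ q x) {g : ℝ → ℝ} (hg : Integrable g)
    (hle : ∀ x, q x * Real.sin (v x / 2) ^ 2 ≤ g x) (ξ : ℝ) :
    Integrable (lagK ℓ v q ξ) :=
  hg.mono' (continuous_lagK hv hc ξ).aestronglyMeasurable
    (ae_of_all _ (norm_lagK_le hℓ hq hle ξ))

/-- Each of the integrals of the kernel over a set of positions is at most the total mass of the
dominating function. -/
lemma abs_setIntegral_lagK_le (hℓ : 0 < ℓ) (hq : ∀ x, 0 ≤ q x) {g : ℝ → ℝ} (hg : Integrable g)
    (hle : ∀ x, q x * Real.sin (v x / 2) ^ 2 ≤ g x) (ξ : ℝ) (S : Set ℝ) :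
    |∫ ξ' in S, lagK ℓ v q ξ ξ'| ≤ ∫ x, g x := by
  have h0 : ∀ x, 0 ≤ g x := fun x => (mul_nonneg (hq _) (sq_nonneg _)).trans (hle x)
  refine (norm_integral_le_of_norm_le hg.integrableOn
    (ae_of_all _ (norm_lagK_le hℓ hq hle ξ))).trans ?_
  exact setIntegral_le_integral hg (ae_of_all _ h0)

lemma abs_lagP_le (hℓ : 0 < ℓ) (hq : ∀ x, 0 ≤ q x) {g : ℝ → ℝ} (hg : Integrable g)
    (hle : ∀ x, q x * Real.sin (v x / 2) ^ 2 ≤ g x) (ξ : ℝ) :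
    |lagP ℓ v q ξ| ≤ 1 / (4 * ℓ) * ∫ x, g x := by
  have h := abs_setIntegral_lagK_le hℓ hq hg hle ξ univ
  rw [setIntegral_univ] at h
  have hp : 0 < 1 / (4 * ℓ) := by positivity
  unfold lagP
  rw [abs_mul, abs_of_pos hp]
  gcongr

lemma abs_lagPx_le (hℓ : 0 < ℓ) (hq : ∀ x, 0 ≤ q x) {g : ℝ → ℝ} (hg : Integrable g)
    (hle : ∀ x, q x * Real.sin (v x / 2) ^ 2 ≤ g x) (ξ : ℝ) :
    |lagPx ℓ v q ξ| ≤ 1 / (4 * ℓ ^ 2) * (2 * ∫ x, g x) := by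
  have h1 := abs_setIntegral_lagK_le hℓ hq hg hle ξ (Ioi ξ)
  have h2 := abs_setIntegral_lagK_le hℓ hq hg hle ξ (Iio ξ)
  have hp : 0 < 1 / (4 * ℓ ^ 2) := by positivity
  unfold lagPx
  rw [abs_mul, abs_of_pos hp]
  gcongr
  exact (abs_sub _ _).trans (by linarith)

lemma hasDerivAt_integral_Ioi {W : ℝ → ℝ} (hW : Continuous W)
    (hint : ∀ a, IntegrableOn W (Ioi a)) (ξ : ℝ) :
    HasDerivAt (fun x => ∫ y in Ioi x, W y) (-W ξ) ξ := by
  have h : (fun x => ∫ y in Ioi x, W y) = fun x => (∫ y in Ioi ξ, W y) - ∫ y in ξ..x, W y := by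
    funext x
    rw [← intervalIntegral.integral_Ioi_sub_Ioi' (hint ξ) (hint x)]
    ring
  rw [h]
  exact (intervalIntegral.integral_hasDerivAt_right (hW.intervalIntegrable _ _)
    hW.stronglyMeasurable.stronglyMeasurableAtFilter hW.continuousAt).const_sub _

lemma hasDerivAt_integral_Iic {W : ℝ → ℝ} (hW : Continuous W)
    (hint : ∀ a, IntegrableOn W (Iic a)) (ξ : ℝ) :
    HasDerivAt (fun x => ∫ y in Iic x, W y) (W ξ) ξ := by
  have h : (fun x => ∫ y in Iic x, W y) = fun x => (∫ y in Iic ξ, W y) + ∫ y in ξ..x, W y := by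
    funext x
    rw [← intervalIntegral.integral_Iic_sub_Iic (hint ξ) (hint x)]
    ring
  rw [h]
  exact (intervalIntegral.integral_hasDerivAt_right (hW.intervalIntegrable _ _)
    hW.stronglyMeasurable.stronglyMeasurableAtFilter hW.continuousAt).const_add _

/-- Splitting the absolute value in the kernel by means of a primitive `Y` of `q cos² (v/2)`
factorises each half of the kernel as a function of `ξ` times a function of `ξ'`; the derivatives
of the two half-line integrals follow from the product rule. -/
lemma hasDerivAt_half_integrals (hℓ : 0 < ℓ) (hv : Continuous v) (hc : Continuous q)
    (hq : ∀ x, 0 ≤ q x) {g : ℝ → ℝ} (hg : Integrable g)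
    (hle : ∀ x, q x * Real.sin (v x / 2) ^ 2 ≤ g x) (ξ : ℝ) :
    HasDerivAt (fun x => ∫ y in Ioi x, lagK ℓ v q x y)
      (1 / ℓ * (q ξ * Real.cos (v ξ / 2) ^ 2) * (∫ y in Ioi ξ, lagK ℓ v q ξ y)
        - q ξ * Real.sin (v ξ / 2) ^ 2) ξ ∧
    HasDerivAt (fun x => ∫ y in Iio x, lagK ℓ v q x y)
      (-(1 / ℓ * (q ξ * Real.cos (v ξ / 2) ^ 2) * ∫ y in Iio ξ, lagK ℓ v q ξ y)
        + q ξ * Real.sin (v ξ / 2) ^ 2) ξ := by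
  set c : ℝ → ℝ := fun s => q s * Real.cos (v s / 2) ^ 2 with hc_def
  have hcc : Continuous c := by fun_prop
  have hc0 : ∀ s, 0 ≤ c s := fun s => mul_nonneg (hq _) (sq_nonneg _)
  set Y : ℝ → ℝ := fun x => ∫ s in (0 : ℝ)..x, c s with hY_def
  have hYd : ∀ x, HasDerivAt Y (c x) x := fun x =>
    intervalIntegral.integral_hasDerivAt_right (hcc.intervalIntegrable _ _)
      hcc.stronglyMeasurable.stronglyMeasurableAtFilter hcc.continuousAt
  have hYc : Continuous Y := continuous_iff_continuousAt.2 fun x => (hYd x).continuousAt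
  have hsub : ∀ x y, ∫ s in x..y, c s = Y y - Y x := fun x y =>
    (intervalIntegral.integral_interval_sub_left (hcc.intervalIntegrable _ _)
      (hcc.intervalIntegrable _ _)).symm
  have hKr : ∀ x y, x ≤ y → lagK ℓ v q x y = Real.exp (1 / ℓ * Y x) *
      (Real.exp (-(1 / ℓ) * Y y) * (q y * Real.sin (v y / 2) ^ 2)) := by
    intro x y hxy
    have h0 : 0 ≤ ∫ s in x..y, c s := intervalIntegral.integral_nonneg hxy fun s _ => hc0 s
    unfold lagK
    rw [abs_of_nonneg h0, hsub, ← mul_assoc (Real.exp _) (Real.exp _), ← Real.exp_add]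
    ring_nf
  have hKl : ∀ x y, y ≤ x → lagK ℓ v q x y = Real.exp (-(1 / ℓ) * Y x) *
      (Real.exp (1 / ℓ * Y y) * (q y * Real.sin (v y / 2) ^ 2)) := by
    intro x y hxy
    have h0 : ∫ s in x..y, c s ≤ 0 := by
      rw [intervalIntegral.integral_symm, neg_nonpos]
      exact intervalIntegral.integral_nonneg hxy fun s _ => hc0 s
    unfold lagK
    rw [abs_of_nonpos h0, hsub, ← mul_assoc (Real.exp _) (Real.exp _), ← Real.exp_add]
    ring_nf
  have hKint := integrable_lagK hℓ hv hc hq hg hle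
  have hR : ∀ x, ∫ y in Ioi x, lagK ℓ v q x y = Real.exp (1 / ℓ * Y x) *
      ∫ y in Ioi x, Real.exp (-(1 / ℓ) * Y y) * (q y * Real.sin (v y / 2) ^ 2) := by
    intro x
    rw [← integral_const_mul]
    exact setIntegral_congr_fun measurableSet_Ioi fun y hy => hKr x y (le_of_lt hy)
  have hL : ∀ x, ∫ y in Iio x, lagK ℓ v q x y = Real.exp (-(1 / ℓ) * Y x) *
      ∫ y in Iic x, Real.exp (1 / ℓ * Y y) * (q y * Real.sin (v y / 2) ^ 2) := by
    intro x
    rw [← integral_Iic_eq_integral_Iio, ← integral_const_mul]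
    exact setIntegral_congr_fun measurableSet_Iic fun y hy => hKl x y hy
  have hRint : ∀ a, IntegrableOn
      (fun y => Real.exp (-(1 / ℓ) * Y y) * (q y * Real.sin (v y / 2) ^ 2)) (Ioi a) := by
    intro a
    refine IntegrableOn.congr_fun (((hKint a).integrableOn (s := Ioi a)).const_mul
      (Real.exp (-(1 / ℓ * Y a)))) (fun y hy => ?_) measurableSet_Ioi
    simp only [hKr a y (le_of_lt hy)]
    rw [← mul_assoc (Real.exp _) (Real.exp _), ← Real.exp_add, neg_add_cancel, Real.exp_zero, one_mul]
  have hLint : ∀ a, IntegrableOn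
      (fun y => Real.exp (1 / ℓ * Y y) * (q y * Real.sin (v y / 2) ^ 2)) (Iic a) := by
    intro a
    refine IntegrableOn.congr_fun (((hKint a).integrableOn (s := Iic a)).const_mul
      (Real.exp (1 / ℓ * Y a))) (fun y hy => ?_) measurableSet_Iic
    simp only [hKl a y hy]
    rw [← mul_assoc (Real.exp _) (Real.exp _), ← Real.exp_add, neg_mul, add_neg_cancel, Real.exp_zero, one_mul]
  have hE : Real.exp (1 / ℓ * Y ξ) * Real.exp (-(1 / ℓ) * Y ξ) = 1 := by
    rw [← Real.exp_add, neg_mul, add_neg_cancel, Real.exp_zero]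
  constructor
  · have h := ((hYd ξ).const_mul (1 / ℓ)).exp.mul
      (hasDerivAt_integral_Ioi (by fun_prop) hRint ξ)
    rw [funext hR, hR ξ]
    refine h.congr_deriv ?_
    linear_combination (-(q ξ * Real.sin (v ξ / 2) ^ 2)) * hE
  · have h := ((hYd ξ).const_mul (-(1 / ℓ))).exp.mul
      (hasDerivAt_integral_Iic (by fun_prop) hLint ξ)
    rw [funext hL, hL ξ]
    refine h.congr_deriv ?_
    linear_combination (q ξ * Real.sin (v ξ / 2) ^ 2) * hE

lemma lagP_eq_half_integrals (hℓ : 0 < ℓ) (hv : Continuous v) (hc : Continuous q)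
    (hq : ∀ x, 0 ≤ q x) {g : ℝ → ℝ} (hg : Integrable g)
    (hle : ∀ x, q x * Real.sin (v x / 2) ^ 2 ≤ g x) (ξ : ℝ) :
    lagP ℓ v q ξ = 1 / (4 * ℓ) *
      ((∫ y in Ioi ξ, lagK ℓ v q ξ y) + ∫ y in Iio ξ, lagK ℓ v q ξ y) := by
  have hK := integrable_lagK hℓ hv hc hq hg hle ξ
  unfold lagP
  rw [← integral_Iic_eq_integral_Iio, add_comm,
    intervalIntegral.integral_Iic_add_Ioi hK.integrableOn hK.integrableOn]

/-- `P_ξ = q cos² (v/2) P_x`: the Lagrangian form of the chain rule, with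
`y_ξ = q cos² (v/2)`. The two local terms `± q sin² (v/2)` cancel. -/
lemma hasDerivAt_lagP (hℓ : 0 < ℓ) (hv : Continuous v) (hc : Continuous q)
    (hq : ∀ x, 0 ≤ q x) {g : ℝ → ℝ} (hg : Integrable g)
    (hle : ∀ x, q x * Real.sin (v x / 2) ^ 2 ≤ g x) (ξ : ℝ) :
    HasDerivAt (lagP ℓ v q) (q ξ * Real.cos (v ξ / 2) ^ 2 * lagPx ℓ v q ξ) ξ := by
  obtain ⟨h1, h2⟩ := hasDerivAt_half_integrals hℓ hv hc hq hg hle ξ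
  rw [funext (lagP_eq_half_integrals hℓ hv hc hq hg hle)]
  refine ((h1.add h2).const_mul (1 / (4 * ℓ))).congr_deriv ?_
  unfold lagPx
  field_simp
  ring

lemma continuous_lagP (hℓ : 0 < ℓ) (hv : Continuous v) (hc : Continuous q)
    (hq : ∀ x, 0 ≤ q x) {g : ℝ → ℝ} (hg : Integrable g)
    (hle : ∀ x, q x * Real.sin (v x / 2) ^ 2 ≤ g x) : Continuous (lagP ℓ v q) :=
  continuous_iff_continuousAt.2 fun x => (hasDerivAt_lagP hℓ hv hc hq hg hle x).continuousAt

lemma continuous_lagPx (hℓ : 0 < ℓ) (hv : Continuous v) (hc : Continuous q)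
    (hq : ∀ x, 0 ≤ q x) {g : ℝ → ℝ} (hg : Integrable g)
    (hle : ∀ x, q x * Real.sin (v x / 2) ^ 2 ≤ g x) : Continuous (lagPx ℓ v q) :=
  continuous_iff_continuousAt.2 fun x =>
    have h := hasDerivAt_half_integrals hℓ hv hc hq hg hle x
    (h.1.continuousAt.sub h.2.continuousAt).const_mul (1 / (4 * ℓ ^ 2))

end FixedTime

/-- Continuity in time of `P` at a fixed position, by dominated convergence. -/
lemma continuousOn_lagP_time {ℓ T : ℝ} (hℓ : 0 < ℓ) {v q : ℝ → ℝ → ℝ}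
    (hcv : Continuous fun p : ℝ × ℝ => v p.1 p.2)
    (hcq : Continuous fun p : ℝ × ℝ => q p.1 p.2)
    (hq0 : ∀ t ∈ Set.Icc (0 : ℝ) T, ∀ ξ : ℝ, 0 ≤ q t ξ) {g : ℝ → ℝ} (hg : Integrable g)
    (hle : ∀ t ∈ Set.Icc (0 : ℝ) T, ∀ ξ : ℝ, q t ξ * Real.sin (v t ξ / 2) ^ 2 ≤ g ξ) (ξ : ℝ) :
    ContinuousOn (fun t => lagP ℓ (v t) (q t) ξ) (Icc 0 T) := by
  have hcv' : ∀ t, Continuous (v t) := fun t => hcv.comp (by fun_prop : Continuous fun x => (t, x))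
  have hcq' : ∀ t, Continuous (q t) := fun t => hcq.comp (by fun_prop : Continuous fun x => (t, x))
  have hcv'' : ∀ x, Continuous fun t => v t x := fun x =>
    hcv.comp (by fun_prop : Continuous fun t => (t, x))
  have hcq'' : ∀ x, Continuous fun t => q t x := fun x =>
    hcq.comp (by fun_prop : Continuous fun t => (t, x))
  unfold lagP
  refine continuousOn_const.mul (continuousOn_of_dominated (bound := g)
    (fun t _ => (continuous_lagK (hcv' t) (hcq' t) ξ).aestronglyMeasurable)
    (fun t ht => ae_of_all _ (norm_lagK_le hℓ (hq0 t ht) (hle t ht) ξ)) hg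
    (ae_of_all _ fun y => Continuous.continuousOn ?_))
  have h : Continuous fun t => ∫ s in ξ..y, q t s * Real.cos (v t s / 2) ^ 2 := by
    refine intervalIntegral.continuous_parametric_intervalIntegral_of_continuous' ?_ ξ y
    exact hcq.mul ((Real.continuous_cos.comp (hcv.div_const 2)).pow 2)
  have h1 := hcv'' y
  have h2 := hcq'' y
  unfold lagK
  fun_prop

/-! ### Integrating a conservation law with dominated density and bounded flux -/

/-- If `e_t = A = -F_ξ` on `[0, T] × ℝ`, the density `e` is dominated by an integrable function,
the flux `F` is bounded and has equal limits at `±∞`, then the integral of `e` is conserved.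
On `[-N, N]` the change of the integral is the time integral of the flux difference, which tends
to zero as `N → ∞` by dominated convergence. -/
lemma integral_eq_of_conservation_law {T : ℝ} {e A F : ℝ → ℝ → ℝ} {g : ℝ → ℝ} {M M' : ℝ}
    (hec : ∀ t ∈ Icc (0 : ℝ) T, Continuous (e t))
    (hAc : ∀ t ∈ Icc (0 : ℝ) T, Continuous (A t))
    (heA : ∀ t ∈ Icc (0 : ℝ) T, ∀ ξ, HasDerivAt (fun s => e s ξ) (A t ξ) t)
    (hFA : ∀ t ∈ Icc (0 : ℝ) T, ∀ ξ, HasDerivAt (F t) (-A t ξ) ξ)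
    (hAb : ∀ t ∈ Icc (0 : ℝ) T, ∀ ξ, |A t ξ| ≤ M)
    (hFc : ∀ ξ, ContinuousOn (fun t => F t ξ) (Icc 0 T))
    (hFb : ∀ t ∈ Icc (0 : ℝ) T, ∀ ξ, |F t ξ| ≤ M')
    (hg : Integrable g) (heg : ∀ t ∈ Icc (0 : ℝ) T, ∀ ξ, |e t ξ| ≤ g ξ)
    (hlim : ∀ t ∈ Icc (0 : ℝ) T, ∃ L : ℝ,
      Tendsto (F t) atTop (nhds L) ∧ Tendsto (F t) atBot (nhds L))
    {t : ℝ} (ht : t ∈ Icc (0 : ℝ) T) :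
    ∫ ξ, e t ξ = ∫ ξ, e 0 ξ := by
  have hint : ∀ s ∈ Icc (0 : ℝ) T, Integrable (e s) := fun s hs =>
    hg.mono' (hec s hs).aestronglyMeasurable (ae_of_all _ (heg s hs))
  have h0 : (0 : ℝ) ∈ Icc (0 : ℝ) T := ⟨le_rfl, ht.1.trans ht.2⟩
  have hsub : Icc 0 t ⊆ Icc 0 T := Icc_subset_Icc_right ht.2
  have hN : ∀ N : ℝ, ∫ s in (0 : ℝ)..t, (F s (-N) - F s N) =
      (∫ ξ in (-N)..N, e t ξ) - ∫ ξ in (-N)..N, e 0 ξ := by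
    intro N
    refine intervalIntegral.integral_eq_sub_of_hasDerivAt_of_le
      (f := fun s => ∫ ξ in (-N)..N, e s ξ) ht.1 ?_ ?_ ?_
    · intro s hs
      refine intervalIntegral.continuousWithinAt_of_dominated_interval (bound := g) ?_ ?_
        hg.intervalIntegrable ?_
      · filter_upwards [self_mem_nhdsWithin] with r hr
        exact (hec r (hsub hr)).aestronglyMeasurable
      · filter_upwards [self_mem_nhdsWithin] with r hr
        exact ae_of_all _ fun ξ _ => heg r (hsub hr) ξ
      · exact ae_of_all _ fun ξ _ => (heA s (hsub hs) ξ).continuousAt.continuousWithinAt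
    · intro s hs
      have hnhds : Ioo 0 t ∈ nhds s := isOpen_Ioo.mem_nhds hs
      have hsub' : ∀ r ∈ Ioo 0 t, r ∈ Icc 0 T := fun r hr => hsub (Ioo_subset_Icc_self hr)
      have h := (intervalIntegral.hasDerivAt_integral_of_dominated_loc_of_deriv_le
        (μ := volume) (a := -N) (b := N) (F := e) (F' := A) (bound := fun _ => M) hnhds
        (by filter_upwards [hnhds] with r hr using (hec r (hsub' r hr)).aestronglyMeasurable)
        ((hec s (hsub' s hs)).intervalIntegrable _ _)
        (hAc s (hsub' s hs)).aestronglyMeasurable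
        (ae_of_all _ fun ξ _ r hr => hAb r (hsub' r hr) ξ)
        intervalIntegrable_const
        (ae_of_all _ fun ξ _ r hr => heA r (hsub' r hr) ξ)).2
      refine h.congr_deriv ?_
      have hF := intervalIntegral.integral_eq_sub_of_hasDerivAt (a := -N) (b := N)
        (fun ξ _ => hFA s (hsub' s hs) ξ)
        ((hAc s (hsub' s hs)).neg.intervalIntegrable _ _)
      rw [intervalIntegral.integral_neg] at hF
      linarith
    · refine ContinuousOn.intervalIntegrable ?_
      rw [uIcc_of_le ht.1]
      exact ((hFc (-N)).sub (hFc N)).mono hsub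
  have hflux : Tendsto (fun N : ℝ => ∫ s in (0 : ℝ)..t, (F s (-N) - F s N)) atTop
      (nhds (∫ _ in (0 : ℝ)..t, (0 : ℝ))) := by
    have hmem : ∀ s ∈ uIoc 0 t, s ∈ Icc 0 T := fun s hs =>
      hsub (Ioc_subset_Icc_self (by rwa [uIoc_of_le ht.1] at hs))
    refine intervalIntegral.tendsto_integral_filter_of_dominated_convergence
      (fun _ => M' + M') ?_ ?_ intervalIntegrable_const ?_
    · refine Eventually.of_forall fun N => ?_
      exact (((hFc (-N)).sub (hFc N)).mono hmem).aestronglyMeasurable measurableSet_uIoc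
    · refine Eventually.of_forall fun N => ae_of_all _ fun s hs => ?_
      exact (abs_sub _ _).trans (add_le_add (hFb s (hmem s hs) _) (hFb s (hmem s hs) _))
    · refine ae_of_all _ fun s hs => ?_
      obtain ⟨L, hL1, hL2⟩ := hlim s (hmem s hs)
      simpa using (hL2.comp tendsto_neg_atTop_atBot).sub hL1
  rw [intervalIntegral.integral_zero] at hflux
  have hE := (intervalIntegral_tendsto_integral (hint t ht) tendsto_neg_atTop_atBot
    tendsto_id).sub (intervalIntegral_tendsto_integral (hint 0 h0) tendsto_neg_atTop_atBot
    tendsto_id)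
  have := tendsto_nhds_unique hE (hflux.congr hN)
  linarith

/-- Since the cubic term dominates, a flux `a u P - u³/3` with bounded `P` and finite limits
at `±∞` forces the continuous function `u` to be bounded. -/
lemma bounded_of_flux_limits {u P : ℝ → ℝ} {a C L L' : ℝ} (hu : Continuous u)
    (hP : ∀ ξ, |P ξ| ≤ C)
    (hL : Tendsto (fun ξ => a * u ξ * P ξ - u ξ ^ 3 / 3) atTop (nhds L))
    (hL' : Tendsto (fun ξ => a * u ξ * P ξ - u ξ ^ 3 / 3) atBot (nhds L')) :
    ∃ M, ∀ ξ, |u ξ| ≤ M := by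
  have hC : 0 ≤ C := (abs_nonneg _).trans (hP 0)
  have key : ∀ D ξ, |a * u ξ * P ξ - u ξ ^ 3 / 3| ≤ D → |u ξ| ≤ 1 + 3 * (D + |a| * C) := by
    intro D ξ hD
    have hD0 : 0 ≤ D := (abs_nonneg _).trans hD
    have h1 : |u ξ| ^ 3 / 3 ≤ D + |a| * |u ξ| * C := by
      have h2 : |u ξ ^ 3 / 3| ≤ |a * u ξ * P ξ - u ξ ^ 3 / 3| + |a * u ξ * P ξ| := by
        have := abs_sub (a * u ξ * P ξ) (a * u ξ * P ξ - u ξ ^ 3 / 3)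
        rw [sub_sub_cancel] at this
        linarith
      have h3 : |a * u ξ * P ξ| ≤ |a| * |u ξ| * C := by
        rw [abs_mul, abs_mul]
        exact mul_le_mul_of_nonneg_left (hP ξ) (by positivity)
      rw [abs_div, abs_pow, abs_of_pos (by norm_num : (0 : ℝ) < 3)] at h2
      linarith
    by_contra! hlt
    have hE : 0 ≤ |a| * C := by positivity
    set x := |u ξ|
    have hx : 1 < x := by linarith
    -- beyond `1 + 3 (D + |a| C)` one has `x³ > 3 (D + |a| C) x ≥ 3 (D + |a| C x)`
    have h4 : D ≤ D * x := by nlinarith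
    have h5 : 3 * (D + |a| * C) * x < x * x := by nlinarith
    have h6 : x * x ≤ x ^ 3 := by nlinarith [mul_pos (by linarith : 0 < x) (by linarith : 0 < x)]
    nlinarith
  have hb1 := hL.abs.eventually (eventually_le_nhds (lt_add_one |L|))
  have hb2 := hL'.abs.eventually (eventually_le_nhds (lt_add_one |L'|))
  obtain ⟨b, hb⟩ := eventually_atTop.1 hb1
  obtain ⟨c, hc⟩ := eventually_atBot.1 hb2
  obtain ⟨m, hm⟩ := (isCompact_Icc (a := c) (b := b)).exists_bound_of_continuousOn hu.continuousOn
  refine ⟨max m (max (1 + 3 * (|L| + 1 + |a| * C)) (1 + 3 * (|L'| + 1 + |a| * C))), fun ξ => ?_⟩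
  rcases le_total b ξ with h | h
  · exact (key _ ξ (hb ξ h)).trans ((le_max_left _ _).trans (le_max_right _ _))
  rcases le_total ξ c with h' | h'
  · exact (key _ ξ (hc ξ h')).trans ((le_max_right _ _).trans (le_max_right _ _))
  · exact (hm ξ ⟨h', h⟩).trans (le_max_left _ _)

/-! ### The conservation law for the Lagrangian system -/

/-- The pointwise content of the energy identity: the time derivative of the energy density along
the ordinary differential equations for `u`, `v`, `q` (at a fixed position), with `p`, `px` the
values of `P`, `P_x`, is minus the `ξ`-derivative of the flux. After passing to the half angle,
`sin² + cos² = 1` reduces the terms without `P_x` to `(u² - 2ℓ²P) · ½ q sin v`. -/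
lemma hasDerivAt_energy_density {ℓ t p px : ℝ} {u v q : ℝ → ℝ}
    (hu : HasDerivAt u (-ℓ ^ 2 * px) t)
    (hv : HasDerivAt v (-p * (1 + Real.cos (v t)) - Real.sin (v t / 2) ^ 2) t)
    (hq : HasDerivAt q (q t * (1 / 2 - p) * Real.sin (v t)) t) :
    HasDerivAt (fun s => (u s ^ 2 * Real.cos (v s / 2) ^ 2
        + ℓ ^ 2 * Real.sin (v s / 2) ^ 2) * q s)
      ((u t ^ 2 - 2 * ℓ ^ 2 * p) * (q t * Real.sin (v t) / 2)
        - 2 * ℓ ^ 2 * u t * (q t * Real.cos (v t / 2) ^ 2 * px)) t := by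
  have h := (((hu.pow 2).mul ((hv.div_const 2).cos.pow 2)).add
    (((hv.div_const 2).sin.pow 2).const_mul (ℓ ^ 2))).mul hq
  refine h.congr_deriv ?_
  have hs : Real.sin (v t) = 2 * Real.sin (v t / 2) * Real.cos (v t / 2) := by
    rw [← Real.sin_two_mul]; ring_nf
  have hc : Real.cos (v t) = 2 * Real.cos (v t / 2) ^ 2 - 1 := by
    rw [← Real.cos_two_mul]; ring_nf
  have h1 := Real.sin_sq_add_cos_sq (v t / 2)
  simp only [Pi.mul_apply, Pi.add_apply, Pi.pow_apply]
  rw [hs, hc]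
  generalize Real.sin (v t / 2) = s at *
  generalize Real.cos (v t / 2) = k at *
  generalize q t = q at *
  generalize u t = u at *
  push_cast
  linear_combination (q * s * k * (u ^ 2 - 2 * p * ℓ ^ 2)) * h1

/-- **Energy conservation in Lagrangian coordinates** (identity (4.30)): for solutions of
the semilinear Lagrangian system with `u_ξ = ½ q sin v`, the pointwise conservation law
`∂_t[(u² cos²(v/2) + ℓ² sin²(v/2)) q] + ∂_ξ[2ℓ²uP − ⅓u³] = 0` holds; consequently, under
a uniform-in-time domination of the energy density and equal limits of the flux at
`ξ → ±∞`, the Lagrangian energy `∫ (u² cos²(v/2) + ℓ² sin²(v/2)) q dξ` is constant. -/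
theorem lagrangian_energy_conservation (ℓ T : ℝ) (hℓ : 0 < ℓ) (hT : 0 < T)
    (u v q ut uξ utξ vt qt : ℝ → ℝ → ℝ)
    (hcv : Continuous fun p : ℝ × ℝ => v p.1 p.2)
    (hcq : Continuous fun p : ℝ × ℝ => q p.1 p.2)
    (hcutξ : Continuous fun p : ℝ × ℝ => utξ p.1 p.2)
    (hut : ∀ t ∈ Set.Icc (0 : ℝ) T, ∀ ξ : ℝ, HasDerivAt (fun s => u s ξ) (ut t ξ) t)
    (huξ : ∀ t ∈ Set.Icc (0 : ℝ) T, ∀ ξ : ℝ, HasDerivAt (fun ζ => u t ζ) (uξ t ξ) ξ)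
    (hvt : ∀ t ∈ Set.Icc (0 : ℝ) T, ∀ ξ : ℝ, HasDerivAt (fun s => v s ξ) (vt t ξ) t)
    (hqt : ∀ t ∈ Set.Icc (0 : ℝ) T, ∀ ξ : ℝ, HasDerivAt (fun s => q s ξ) (qt t ξ) t)
    (hmix₁ : ∀ t ∈ Set.Icc (0 : ℝ) T, ∀ ξ : ℝ, HasDerivAt (fun ζ => ut t ζ) (utξ t ξ) ξ)
    (hmix₂ : ∀ t ∈ Set.Icc (0 : ℝ) T, ∀ ξ : ℝ, HasDerivAt (fun s => uξ s ξ) (utξ t ξ) t)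
    (hq0 : ∀ t ∈ Set.Icc (0 : ℝ) T, ∀ ξ : ℝ, 0 ≤ q t ξ)
    (hqb : ∃ C : ℝ, ∀ t ∈ Set.Icc (0 : ℝ) T, ∀ ξ : ℝ, q t ξ ≤ C)
    (hunif : ∃ g : ℝ → ℝ, MeasureTheory.Integrable g ∧
      ∀ t ∈ Set.Icc (0 : ℝ) T, ∀ ξ : ℝ, q t ξ * Real.sin (v t ξ / 2) ^ 2 ≤ g ξ)
    (heq₁ : ∀ t ∈ Set.Icc (0 : ℝ) T, ∀ ξ : ℝ, ut t ξ = -ℓ ^ 2 * lagPx ℓ (v t) (q t) ξ)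
    (heq₂ : ∀ t ∈ Set.Icc (0 : ℝ) T, ∀ ξ : ℝ,
      vt t ξ = -(lagP ℓ (v t) (q t) ξ) * (1 + Real.cos (v t ξ)) - Real.sin (v t ξ / 2) ^ 2)
    (heq₃ : ∀ t ∈ Set.Icc (0 : ℝ) T, ∀ ξ : ℝ,
      qt t ξ = q t ξ * (1 / 2 - lagP ℓ (v t) (q t) ξ) * Real.sin (v t ξ))
    -- the persistence identity `u_ξ = ½ q sin v`
    (huq : ∀ t ∈ Set.Icc (0 : ℝ) T, ∀ ξ : ℝ, uξ t ξ = q t ξ * Real.sin (v t ξ) / 2) :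
    (∀ t ∈ Set.Icc (0 : ℝ) T, ∀ ξ : ℝ, ∃ A B : ℝ,
      HasDerivAt (fun s => (u s ξ ^ 2 * Real.cos (v s ξ / 2) ^ 2
          + ℓ ^ 2 * Real.sin (v s ξ / 2) ^ 2) * q s ξ) A t ∧
      HasDerivAt (fun ζ => 2 * ℓ ^ 2 * u t ζ * lagP ℓ (v t) (q t) ζ - u t ζ ^ 3 / 3) B ξ ∧
      A + B = 0) ∧
    ((∃ g : ℝ → ℝ, MeasureTheory.Integrable g ∧
        ∀ t ∈ Set.Icc (0 : ℝ) T, ∀ ξ : ℝ,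
          |(u t ξ ^ 2 * Real.cos (v t ξ / 2) ^ 2
            + ℓ ^ 2 * Real.sin (v t ξ / 2) ^ 2) * q t ξ| ≤ g ξ) →
      (∀ t ∈ Set.Icc (0 : ℝ) T, ∃ L : ℝ,
        Filter.Tendsto (fun ξ => 2 * ℓ ^ 2 * u t ξ * lagP ℓ (v t) (q t) ξ - u t ξ ^ 3 / 3)
          Filter.atTop (nhds L) ∧
        Filter.Tendsto (fun ξ => 2 * ℓ ^ 2 * u t ξ * lagP ℓ (v t) (q t) ξ - u t ξ ^ 3 / 3)
          Filter.atBot (nhds L)) →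
      ∀ t ∈ Set.Icc (0 : ℝ) T,
        (∫ ξ : ℝ, (u t ξ ^ 2 * Real.cos (v t ξ / 2) ^ 2
            + ℓ ^ 2 * Real.sin (v t ξ / 2) ^ 2) * q t ξ) =
        ∫ ξ : ℝ, (u 0 ξ ^ 2 * Real.cos (v 0 ξ / 2) ^ 2
            + ℓ ^ 2 * Real.sin (v 0 ξ / 2) ^ 2) * q 0 ξ) := by
  obtain ⟨C, hC⟩ := hqb
  obtain ⟨g, hg, hle⟩ := hunif
  have hcv' : ∀ t, Continuous (v t) := fun t => hcv.comp (by fun_prop : Continuous fun x => (t, x))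
  have hcq' : ∀ t, Continuous (q t) := fun t => hcq.comp (by fun_prop : Continuous fun x => (t, x))
  have hcu : ∀ t ∈ Icc (0 : ℝ) T, Continuous (u t) := fun t ht =>
    continuous_iff_continuousAt.2 fun ξ => (huξ t ht ξ).continuousAt
  set A : ℝ → ℝ → ℝ := fun t ξ =>
    (u t ξ ^ 2 - 2 * ℓ ^ 2 * lagP ℓ (v t) (q t) ξ) * (q t ξ * Real.sin (v t ξ) / 2)
      - 2 * ℓ ^ 2 * u t ξ * (q t ξ * Real.cos (v t ξ / 2) ^ 2 * lagPx ℓ (v t) (q t) ξ) with hA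
  have heA : ∀ t ∈ Icc (0 : ℝ) T, ∀ ξ, HasDerivAt (fun s => (u s ξ ^ 2 * Real.cos (v s ξ / 2) ^ 2
      + ℓ ^ 2 * Real.sin (v s ξ / 2) ^ 2) * q s ξ) (A t ξ) t := fun t ht ξ =>
    hasDerivAt_energy_density (heq₁ t ht ξ ▸ hut t ht ξ) (heq₂ t ht ξ ▸ hvt t ht ξ)
      (heq₃ t ht ξ ▸ hqt t ht ξ)
  have hFA : ∀ t ∈ Icc (0 : ℝ) T, ∀ ξ, HasDerivAt
      (fun ζ => 2 * ℓ ^ 2 * u t ζ * lagP ℓ (v t) (q t) ζ - u t ζ ^ 3 / 3) (-A t ξ) ξ := by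
    intro t ht ξ
    have h1 := huξ t ht ξ
    rw [huq t ht ξ] at h1
    have h2 := hasDerivAt_lagP hℓ (hcv' t) (hcq' t) (hq0 t ht) hg (hle t ht) ξ
    refine (((h1.const_mul (2 * ℓ ^ 2)).mul h2).sub ((h1.pow 3).div_const 3)).congr_deriv ?_
    simp only [hA]
    push_cast
    ring
  refine ⟨fun t ht ξ => ⟨A t ξ, -A t ξ, heA t ht ξ, hFA t ht ξ, add_neg_cancel _⟩, ?_⟩
  rintro ⟨g', hg', heg⟩ hlim t ht
  set G := ∫ x, g x
  have hP : ∀ s ∈ Icc (0 : ℝ) T, ∀ ξ, |lagP ℓ (v s) (q s) ξ| ≤ 1 / (4 * ℓ) * G := fun s hs =>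
    abs_lagP_le hℓ (hq0 s hs) hg (hle s hs)
  have hPx : ∀ s ∈ Icc (0 : ℝ) T, ∀ ξ, |lagPx ℓ (v s) (q s) ξ| ≤ 1 / (4 * ℓ ^ 2) * (2 * G) :=
    fun s hs => abs_lagPx_le hℓ (hq0 s hs) hg (hle s hs)
  set p := 1 / (4 * ℓ) * G
  set r := 1 / (4 * ℓ ^ 2) * (2 * G)
  have h0 : (0 : ℝ) ∈ Icc (0 : ℝ) T := ⟨le_rfl, hT.le⟩
  have hp0 : 0 ≤ p := (abs_nonneg _).trans (hP 0 h0 0)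
  have hr0 : 0 ≤ r := (abs_nonneg _).trans (hPx 0 h0 0)
  have hC0 : 0 ≤ C := (hq0 0 h0 0).trans (hC 0 h0 0)
  -- `u` is bounded at the initial time by the limits of the flux, and at later times because
  -- `u_t = -ℓ² P_x` is bounded
  obtain ⟨m, hm⟩ : ∃ m, ∀ s ∈ Icc (0 : ℝ) T, ∀ ξ, |u s ξ| ≤ m := by
    obtain ⟨L, hL, hL'⟩ := hlim 0 h0
    obtain ⟨m, hm⟩ := bounded_of_flux_limits (hcu 0 h0) (hP 0 h0) hL hL'
    refine ⟨ℓ ^ 2 * r * T + m, fun s hs ξ => ?_⟩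
    have h := (convex_Icc (0 : ℝ) T).norm_image_sub_le_of_norm_hasDerivWithin_le
      (f := fun s => u s ξ) (C := ℓ ^ 2 * r) (fun s hs => (hut s hs ξ).hasDerivWithinAt)
      (fun s hs => by
        rw [heq₁ s hs ξ, Real.norm_eq_abs, abs_mul, abs_neg, abs_of_nonneg (sq_nonneg ℓ)]
        exact mul_le_mul_of_nonneg_left (hPx s hs ξ) (sq_nonneg ℓ)) h0 hs
    simp only [Real.norm_eq_abs, sub_zero, abs_of_nonneg hs.1] at h
    have h1 : ℓ ^ 2 * r * s ≤ ℓ ^ 2 * r * T := mul_le_mul_of_nonneg_left hs.2 (by positivity)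
    have h2 := abs_sub_abs_le_abs_sub (u s ξ) (u 0 ξ)
    linarith [hm ξ]
  have hm0 : 0 ≤ m := (abs_nonneg _).trans (hm 0 h0 0)
  refine integral_eq_of_conservation_law
    (e := fun s ξ => (u s ξ ^ 2 * Real.cos (v s ξ / 2) ^ 2
      + ℓ ^ 2 * Real.sin (v s ξ / 2) ^ 2) * q s ξ) (A := A)
    (F := fun s ζ => 2 * ℓ ^ 2 * u s ζ * lagP ℓ (v s) (q s) ζ - u s ζ ^ 3 / 3)
    (M := (m ^ 2 + 2 * ℓ ^ 2 * p) * C + 2 * ℓ ^ 2 * m * (C * r))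
    (M' := 2 * ℓ ^ 2 * m * p + m ^ 3 / 3) ?_ ?_ heA hFA ?_ ?_ ?_ hg' heg hlim ht
  · intro s hs
    have h1 := hcu s hs
    have h2 := hcv' s
    have h3 := hcq' s
    fun_prop
  · intro s hs
    have h1 := hcu s hs
    have h2 := hcv' s
    have h3 := hcq' s
    have h4 := continuous_lagP hℓ h2 h3 (hq0 s hs) hg (hle s hs)
    have h5 := continuous_lagPx hℓ h2 h3 (hq0 s hs) hg (hle s hs)
    simp only [hA]
    fun_prop
  · intro s hs ξ
    have hq : |q s ξ| ≤ C := by rw [abs_of_nonneg (hq0 s hs ξ)]; exact hC s hs ξ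
    have hsin : |q s ξ * Real.sin (v s ξ) / 2| ≤ C := by
      rw [abs_div, abs_mul, abs_two]
      nlinarith [Real.abs_sin_le_one (v s ξ), abs_nonneg (q s ξ), abs_nonneg (Real.sin (v s ξ))]
    have hcos : |q s ξ * Real.cos (v s ξ / 2) ^ 2| ≤ C := by
      rw [abs_mul, abs_of_nonneg (sq_nonneg (Real.cos _))]
      nlinarith [Real.cos_sq_le_one (v s ξ / 2), abs_nonneg (q s ξ)]
    have h1 : |u s ξ ^ 2 - 2 * ℓ ^ 2 * lagP ℓ (v s) (q s) ξ| ≤ m ^ 2 + 2 * ℓ ^ 2 * p := by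
      refine (abs_sub _ _).trans (add_le_add ?_ ?_)
      · rw [abs_pow]
        exact pow_le_pow_left₀ (abs_nonneg _) (hm s hs ξ) 2
      · rw [abs_mul, abs_of_nonneg (by positivity : 0 ≤ 2 * ℓ ^ 2)]
        exact mul_le_mul_of_nonneg_left (hP s hs ξ) (by positivity)
    refine (abs_sub _ _).trans (add_le_add ?_ ?_)
    · rw [abs_mul]
      exact mul_le_mul h1 hsin (abs_nonneg _) (by positivity)
    · rw [abs_mul, abs_mul (2 * ℓ ^ 2), abs_mul (q s ξ * _),
        abs_of_nonneg (by positivity : 0 ≤ 2 * ℓ ^ 2)]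
      have := hm s hs ξ
      have := hPx s hs ξ
      gcongr
  · intro ξ
    have h1 : ContinuousOn (fun s => u s ξ) (Icc 0 T) := fun s hs =>
      (hut s hs ξ).continuousAt.continuousWithinAt
    have h2 := continuousOn_lagP_time hℓ hcv hcq hq0 hg hle ξ
    fun_prop
  · intro s hs ξ
    have h1 := hm s hs ξ
    have h2 := hP s hs ξ
    refine (abs_sub _ _).trans (add_le_add ?_ ?_)
    · rw [abs_mul, abs_mul, abs_of_nonneg (by positivity : 0 ≤ 2 * ℓ ^ 2)]
      gcongr
    · rw [abs_div, abs_pow, abs_of_pos (by norm_num : (0 : ℝ) < 3)]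
      gcongr
end

section
/- Let u₀ > 0 and set F = u₀³/3, S = u₀²/2. Define H(η) = ∫₀^η ( 3v/(2u₀ + v) )^{1/2} · dv/(u₀ − v) for 0 ≤ η < u₀. Then H is a strictly increasing continuous bijection from [0,u₀) onto [0,+∞), differentiable on (0,u₀); letting η := H⁻¹ : [0,∞) → [0,u₀) be its inverse, the function u(x) := η(|x|) is continuous on ℝ, C¹ on ℝ∖{0}, and satisfies: (i) ½ u(x) u'(x)² = F − S u(x) + u(x)³/6 for all x ≠ 0; (ii) u(0) = 0 and u(x) → u₀ as |x| → ∞; (iii) (u')² is locally integrable on ℝ. -/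
open Set Filter MeasureTheory

/-!
The integrand `k v = √(3v/(2u₀+v)) / (u₀-v)` is continuous on all of `(-2u₀, u₀)` (for negative `v`
the square root vanishes), so the fundamental theorem of calculus gives `H' = k` there, and
`k > 0` on `(0, u₀)` makes `H` strictly increasing on `[0, u₀)`. The bound
`v / (u₀ (u₀ - v)) ≤ k v` shows that `H y + y/u₀ + log (u₀ - y)` is nondecreasing, hence `H` is
unbounded and, by the intermediate value theorem, maps `[0, u₀)` onto `[0, ∞)`.

The inverse `η` is an order isomorphism between intervals, so it is continuous, and by the inverse
function theorem `u = η ∘ |·|` has derivative `(x/|x|) / k (η |x|)` off the origin; the ODE is then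
an algebraic identity. Local integrability of `(u')²` holds because for `x > 0`
`(u')² ≤ C u' / √u = (2 C √u)'` with `C = u₀ √u₀`, and the nonnegative derivative of a
continuous function is integrable.
-/

/-- The integrand `k` defining the cuspon profile, so that `dx = k(u) du` along the half-wave. -/
noncomputable def cusponKernel (u₀ v : ℝ) : ℝ := Real.sqrt (3 * v / (2 * u₀ + v)) / (u₀ - v)

lemma cusponKernel_continuousOn (u₀ : ℝ) :
    ContinuousOn (cusponKernel u₀) (Ioo (-(2 * u₀)) u₀) := by
  unfold cusponKernel
  refine ContinuousOn.div (ContinuousOn.sqrt (ContinuousOn.div (by fun_prop) (by fun_prop) ?_))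
    (by fun_prop) ?_
  · intro v hv h
    linarith [hv.1]
  · intro v hv h
    linarith [hv.2]

lemma cusponKernel_pos {u₀ v : ℝ} (hv : v ∈ Ioo 0 u₀) : 0 < cusponKernel u₀ v := by
  have h0 := hv.1
  have h1 : 0 < u₀ - v := sub_pos.2 hv.2
  have h2 : 0 < 2 * u₀ + v := by linarith
  unfold cusponKernel
  positivity

/-- A lower bound for the kernel with an explicit primitive, diverging at `u₀`. -/
lemma le_cusponKernel {u₀ v : ℝ} (hv : v ∈ Ioo 0 u₀) :
    1 / (u₀ - v) - 1 / u₀ ≤ cusponKernel u₀ v := by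
  have h0 := hv.1
  have h1 : 0 < u₀ - v := sub_pos.2 hv.2
  have h2 : 0 < 2 * u₀ + v := by linarith
  have h3 : 0 < u₀ := by linarith
  have e : 1 / (u₀ - v) - 1 / u₀ = (v / u₀) / (u₀ - v) := by
    field_simp
    ring
  rw [e, cusponKernel]
  gcongr
  apply Real.le_sqrt_of_sq_le
  rw [div_pow, div_le_div_iff₀ (by positivity) h2]
  -- After division by `v`, this is `v (2u₀ + v) ≤ 3u₀²`.
  have : 0 ≤ v * ((u₀ - v) * (3 * u₀ + v)) := by positivity
  nlinarith

/-- The first-order ODE, solved for `(u')² = 1 / k(u)²`. -/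
lemma cusponKernel_inv_sq {u₀ v : ℝ} (hv : v ∈ Ioo 0 u₀) :
    (cusponKernel u₀ v)⁻¹ ^ 2 = (u₀ - v) ^ 2 * (2 * u₀ + v) / (3 * v) := by
  have h0 := hv.1
  have h1 : 0 < u₀ - v := sub_pos.2 hv.2
  have h2 : 0 < 2 * u₀ + v := by linarith
  rw [cusponKernel, inv_pow, div_pow, Real.sq_sqrt (by positivity)]
  field_simp

lemma cusponKernel_inv_le {u₀ v : ℝ} (hv : v ∈ Ioo 0 u₀) :
    (cusponKernel u₀ v)⁻¹ ≤ u₀ * Real.sqrt u₀ / Real.sqrt v := by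
  have h0 := hv.1
  have h1 : 0 < u₀ - v := sub_pos.2 hv.2
  have h3 : 0 < u₀ := by linarith
  apply le_of_sq_le_sq _ (by positivity)
  rw [cusponKernel_inv_sq hv, div_pow, mul_pow, Real.sq_sqrt h3.le, Real.sq_sqrt h0.le,
    div_le_div_iff₀ (by positivity) h0]
  have : (u₀ - v) ^ 2 * (2 * u₀ + v) ≤ u₀ ^ 2 * (3 * u₀) := by
    gcongr <;> linarith
  nlinarith

section Profile

variable {u₀ : ℝ} {H : ℝ → ℝ}

lemma cuspon_hasDerivAt (hu₀ : 0 < u₀)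
    (hH : ∀ y : ℝ, H y = ∫ v in (0 : ℝ)..y, cusponKernel u₀ v) {y : ℝ}
    (hy : y ∈ Ioo (-(2 * u₀)) u₀) : HasDerivAt H (cusponKernel u₀ y) y := by
  rw [show H = fun y => ∫ v in (0 : ℝ)..y, cusponKernel u₀ v from funext hH]
  have hc := cusponKernel_continuousOn u₀
  refine intervalIntegral.integral_hasDerivAt_right ?_
    (hc.stronglyMeasurableAtFilter isOpen_Ioo y hy) (hc.continuousAt (isOpen_Ioo.mem_nhds hy))
  exact (hc.mono (ordConnected_Ioo.uIcc_subset ⟨by linarith, hu₀⟩ hy)).intervalIntegrable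

lemma cuspon_continuousOn (hu₀ : 0 < u₀)
    (hH : ∀ y : ℝ, H y = ∫ v in (0 : ℝ)..y, cusponKernel u₀ v) : ContinuousOn H (Ico 0 u₀) :=
  fun _ hy => (cuspon_hasDerivAt hu₀ hH ⟨by linarith [hy.1], hy.2⟩).continuousAt.continuousWithinAt

lemma cuspon_strictMonoOn (hu₀ : 0 < u₀)
    (hH : ∀ y : ℝ, H y = ∫ v in (0 : ℝ)..y, cusponKernel u₀ v) : StrictMonoOn H (Ico 0 u₀) := by
  refine strictMonoOn_of_deriv_pos (convex_Ico 0 u₀) (cuspon_continuousOn hu₀ hH) ?_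
  intro y hy
  rw [interior_Ico] at hy
  rw [(cuspon_hasDerivAt hu₀ hH ⟨by linarith [hy.1], hy.2⟩).deriv]
  exact cusponKernel_pos hy

/-- `H` diverges at `u₀` at least logarithmically. -/
lemma cuspon_lower_bound (hu₀ : 0 < u₀)
    (hH : ∀ y : ℝ, H y = ∫ v in (0 : ℝ)..y, cusponKernel u₀ v) {y : ℝ} (hy : y ∈ Ico 0 u₀) :
    Real.log u₀ ≤ H y + y / u₀ + Real.log (u₀ - y) := by
  have hd : ∀ z ∈ Ico 0 u₀, HasDerivAt (fun z => H z + z / u₀ + Real.log (u₀ - z))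
      (cusponKernel u₀ z + 1 / u₀ + (-1) / (u₀ - z)) z := fun z hz =>
    ((cuspon_hasDerivAt hu₀ hH ⟨by linarith [hz.1], hz.2⟩).add
      ((hasDerivAt_id z).div_const u₀)).add
      (((hasDerivAt_id z).const_sub u₀).log (sub_pos.2 hz.2).ne')
  have hm : MonotoneOn (fun z => H z + z / u₀ + Real.log (u₀ - z)) (Ico 0 u₀) := by
    refine monotoneOn_of_deriv_nonneg (convex_Ico 0 u₀)
      (fun z hz => (hd z hz).continuousAt.continuousWithinAt)
      (fun z hz => (hd z (interior_subset hz)).differentiableAt.differentiableWithinAt) ?_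
    intro z hz
    rw [(hd z (interior_subset hz)).deriv]
    rw [interior_Ico] at hz
    have := le_cusponKernel hz
    rw [neg_div]
    linarith
  have := hm ⟨le_rfl, hu₀⟩ hy hy.1
  simpa [hH 0] using this

lemma cuspon_bijOn (hu₀ : 0 < u₀)
    (hH : ∀ y : ℝ, H y = ∫ v in (0 : ℝ)..y, cusponKernel u₀ v) :
    BijOn H (Ico 0 u₀) (Ici 0) := by
  have hm := cuspon_strictMonoOn hu₀ hH
  have h0 : H 0 = 0 := by simp [hH 0]
  refine ⟨fun y hy => ?_, hm.injOn, fun s hs => ?_⟩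
  · have := hm.monotoneOn ⟨le_rfl, hu₀⟩ hy hy.1
    rwa [h0] at this
  · have hs' : 0 ≤ s := hs
    -- This point makes the lower bound read `s + 1 ≤ H y + y / u₀`.
    set y := u₀ - u₀ * Real.exp (-(s + 1)) with hy
    have he : Real.exp (-(s + 1)) ≤ 1 := Real.exp_le_one_iff.2 (by linarith)
    have hp : 0 < u₀ * Real.exp (-(s + 1)) := by positivity
    have hyI : y ∈ Ico 0 u₀ := ⟨by rw [hy]; nlinarith, by rw [hy]; linarith⟩
    have hb := cuspon_lower_bound hu₀ hH hyI
    rw [show u₀ - y = u₀ * Real.exp (-(s + 1)) by rw [hy]; ring,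
      Real.log_mul hu₀.ne' (Real.exp_pos _).ne', Real.log_exp] at hb
    have h1 : y / u₀ ≤ 1 := (div_le_one hu₀).2 hyI.2.le
    have hsub : Icc 0 y ⊆ Ico 0 u₀ := fun z hz => ⟨hz.1, hz.2.trans_lt hyI.2⟩
    obtain ⟨z, hz, hzs⟩ := intermediate_value_Icc hyI.1 ((cuspon_continuousOn hu₀ hH).mono hsub)
      (show s ∈ Icc (H 0) (H y) from ⟨by rw [h0]; exact hs', by linarith⟩)
    exact ⟨z, hsub hz, hzs⟩

/-- A continuous inverse of `H`; continuity comes from its being an order isomorphism between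
intervals. -/
lemma exists_cuspon_inverse (hm : StrictMonoOn H (Ico 0 u₀)) (hb : BijOn H (Ico 0 u₀) (Ici 0)) :
    ∃ η : ℝ → ℝ, (∀ s : ℝ, 0 ≤ s → η s ∈ Ico 0 u₀ ∧ H (η s) = s) ∧
      Continuous (fun x : ℝ => η |x|) := by
  let e : Ico 0 u₀ ≃o Ici (0 : ℝ) :=
    (StrictMonoOn.orderIso H _ hm).trans (OrderIso.setCongr _ _ hb.image_eq)
  have he : ∀ y, (e y : ℝ) = H y := fun _ => rfl
  refine ⟨fun s => e.symm ⟨|s|, abs_nonneg s⟩, fun s hs => ⟨(e.symm _).2, ?_⟩, ?_⟩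
  · rw [← he, e.apply_symm_apply]
    exact abs_of_nonneg hs
  · have : Continuous fun x : ℝ => (⟨|(|x|)|, mem_Ici.2 (abs_nonneg _)⟩ : Ici (0 : ℝ)) := by
      fun_prop
    exact continuous_subtype_val.comp (e.symm.continuous.comp this)

end Profile

/-- **The cuspon profile** (Section 6, case `3|F| = (2S)^{3/2}`): with `F = u₀³/3`,
`S = u₀²/2` and `H(η) = ∫₀^η √(3v/(2u₀+v)) dv/(u₀−v)`, the map `H` is a strictly
increasing continuous bijection from `[0,u₀)` onto `[0,∞)`, differentiable on `(0,u₀)`;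
its inverse `η` yields the cuspon `u(x) = η(|x|)`, which is continuous on `ℝ`, `C¹`
away from `0`, satisfies the traveling-wave ODE `½uu'² = F − Su + u³/6` for `x ≠ 0`,
`u(0) = 0`, `u(x) → u₀` as `|x| → ∞`, and `(u')²` is locally integrable. -/
theorem cuspon_profile (u₀ : ℝ) (hu₀ : 0 < u₀)
    (F S : ℝ) (hF : F = u₀ ^ 3 / 3) (hS : S = u₀ ^ 2 / 2)
    (H : ℝ → ℝ)
    (hH : ∀ y : ℝ, H y = ∫ v in (0 : ℝ)..y, Real.sqrt (3 * v / (2 * u₀ + v)) / (u₀ - v)) :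
    StrictMonoOn H (Set.Ico 0 u₀) ∧ ContinuousOn H (Set.Ico 0 u₀) ∧
    Set.BijOn H (Set.Ico 0 u₀) (Set.Ici 0) ∧
    (∀ y ∈ Set.Ioo (0 : ℝ) u₀, DifferentiableAt ℝ H y) ∧
    ∃ η u' : ℝ → ℝ,
      (∀ s : ℝ, 0 ≤ s → η s ∈ Set.Ico 0 u₀ ∧ H (η s) = s) ∧
      Continuous (fun x : ℝ => η |x|) ∧
      (∀ x : ℝ, x ≠ 0 → HasDerivAt (fun y : ℝ => η |y|) (u' x) x) ∧
      ContinuousOn u' {x : ℝ | x ≠ 0} ∧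
      (∀ x : ℝ, x ≠ 0 → η |x| * u' x ^ 2 / 2 = F - S * η |x| + η |x| ^ 3 / 6) ∧
      η 0 = 0 ∧
      Filter.Tendsto (fun x : ℝ => η |x|) Filter.atTop (nhds u₀) ∧
      Filter.Tendsto (fun x : ℝ => η |x|) Filter.atBot (nhds u₀) ∧
      MeasureTheory.LocallyIntegrable (fun x : ℝ => u' x ^ 2) := by
  change ∀ y : ℝ, H y = ∫ v in (0 : ℝ)..y, cusponKernel u₀ v at hH
  have hm := cuspon_strictMonoOn hu₀ hH
  have hb := cuspon_bijOn hu₀ hH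
  refine ⟨hm, cuspon_continuousOn hu₀ hH, hb, fun y hy =>
    (cuspon_hasDerivAt hu₀ hH ⟨by linarith [hy.1], hy.2⟩).differentiableAt, ?_⟩
  obtain ⟨η, hη, hc⟩ := exists_cuspon_inverse hm hb
  have h0 : H 0 = 0 := by simp [hH 0]
  have hη0 : η 0 = 0 :=
    hm.injOn (hη 0 le_rfl).1 ⟨le_rfl, hu₀⟩ ((hη 0 le_rfl).2.trans h0.symm)
  have hI : ∀ x : ℝ, x ≠ 0 → η |x| ∈ Ioo 0 u₀ := by
    intro x hx
    obtain ⟨h1, h2⟩ := hη |x| (abs_nonneg x)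
    refine ⟨lt_of_le_of_ne h1.1 fun h => hx ?_, h1.2⟩
    rw [← h, h0] at h2
    exact abs_eq_zero.1 h2.symm
  have hder : ∀ x : ℝ, x ≠ 0 →
      HasDerivAt (fun y : ℝ => η |y|) (x / |x| * (cusponKernel u₀ (η |x|))⁻¹) x := by
    intro x hx
    have hk := cusponKernel_pos (hI x hx)
    have hd := cuspon_hasDerivAt hu₀ hH (y := η |x|)
      ⟨by linarith [(hI x hx).1], (hI x hx).2⟩
    -- Near `x` the sign is constant, and `± H` is a local left inverse of `y ↦ η |y|`.
    rcases lt_or_gt_of_ne hx with h | h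
    · have := HasDerivAt.of_local_left_inverse (g := fun y : ℝ => η |y|) (f := fun z => -H z)
        (a := x) hc.continuousAt hd.neg (neg_ne_zero.2 hk.ne') (by
          filter_upwards [Iio_mem_nhds h] with y hy
          rw [(hη |y| (abs_nonneg y)).2, abs_of_neg hy, neg_neg])
      have e : x / |x| = -1 := by rw [abs_of_neg h, div_neg, div_self hx]
      rw [e, neg_one_mul, ← inv_neg]
      exact this
    · have := HasDerivAt.of_local_left_inverse (g := fun y : ℝ => η |y|) (f := H)
        (a := x) hc.continuousAt hd hk.ne' (by
          filter_upwards [Ioi_mem_nhds h] with y hy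
          rw [(hη |y| (abs_nonneg y)).2, abs_of_pos hy])
      have e : x / |x| = 1 := by rw [abs_of_pos h, div_self hx]
      rw [e, one_mul]
      exact this
  have hcont : ContinuousOn (fun x : ℝ => x / |x| * (cusponKernel u₀ (η |x|))⁻¹)
      {x : ℝ | x ≠ 0} := by
    refine ContinuousOn.mul (ContinuousOn.div (by fun_prop) (by fun_prop)
      fun x hx => abs_ne_zero.2 hx) (ContinuousOn.inv₀ ?_ fun x hx =>
        (cusponKernel_pos (hI x hx)).ne')
    exact (cusponKernel_continuousOn u₀).comp hc.continuousOn fun x hx =>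
      ⟨by linarith [(hI x hx).1], (hI x hx).2⟩
  have hsq : ∀ x : ℝ, x ≠ 0 → (x / |x|) ^ 2 = 1 := by
    intro x hx
    rw [div_pow, sq_abs, div_self (pow_ne_zero 2 hx)]
  have hlim : Tendsto η atTop (nhds u₀) := by
    refine tendsto_order.2 ⟨fun a ha => ?_, fun a ha => ?_⟩
    · have hz : max a 0 ∈ Ico 0 u₀ := ⟨le_max_right _ _, max_lt ha hu₀⟩
      filter_upwards [eventually_gt_atTop (H (max a 0)), eventually_ge_atTop 0] with s hs hs0
      obtain ⟨h1, h2⟩ := hη s hs0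
      rw [← h2] at hs
      exact (le_max_left _ _).trans_lt ((hm.lt_iff_lt hz h1).1 hs)
    · filter_upwards [eventually_ge_atTop 0] with s hs
      exact (hη s hs).1.2.trans ha
  refine ⟨η, fun x => x / |x| * (cusponKernel u₀ (η |x|))⁻¹, hη, hc, hder, hcont, ?_, hη0,
    hlim.comp tendsto_abs_atTop_atTop, hlim.comp tendsto_abs_atBot_atTop, ?_⟩
  · intro x hx
    have h1 := (hI x hx).1
    simp only [mul_pow]
    rw [hsq x hx, cusponKernel_inv_sq (hI x hx), hF, hS]
    field_simp
    ring
  · have hpos : ∀ b : ℝ, 0 < b → IntervalIntegrable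
        (fun x : ℝ => (x / |x| * (cusponKernel u₀ (η |x|))⁻¹) ^ 2) volume 0 b := by
      intro b hb
      set C := u₀ * Real.sqrt u₀
      have hg : IntegrableOn (fun x : ℝ => 2 * C *
          (x / |x| * (cusponKernel u₀ (η |x|))⁻¹ / (2 * Real.sqrt (η |x|)))) (Ioc 0 b) := by
        refine intervalIntegral.integrableOn_deriv_of_nonneg
          (g := fun x => 2 * C * Real.sqrt (η |x|))
          (continuous_const.mul hc.sqrt).continuousOn (fun x hx => ?_) fun x hx => ?_
        · exact ((hder x hx.1.ne').sqrt (hI x hx.1.ne').1.ne').const_mul _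
        · have := cusponKernel_pos (hI x hx.1.ne')
          have := hx.1
          positivity
      rw [intervalIntegrable_iff_integrableOn_Ioc_of_le hb.le]
      refine Integrable.mono' hg (((hcont.mono fun x hx => ?_).pow 2).aestronglyMeasurable
        measurableSet_Ioc) ((ae_restrict_iff' measurableSet_Ioc).2 (Eventually.of_forall ?_))
      · exact (show (0 : ℝ) < x from hx.1).ne'
      · intro x hx
        have hx0 := hx.1
        have hk := cusponKernel_pos (hI x hx0.ne')
        have hle := cusponKernel_inv_le (hI x hx0.ne')
        have hs : 0 < Real.sqrt (η |x|) := Real.sqrt_pos.2 (hI x hx0.ne').1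
        rw [Real.norm_of_nonneg (sq_nonneg _), mul_pow, hsq x hx0.ne', one_mul]
        have e : x / |x| = 1 := by rw [abs_of_pos hx0, div_self hx0.ne']
        rw [e, one_mul, sq]
        calc (cusponKernel u₀ (η |x|))⁻¹ * (cusponKernel u₀ (η |x|))⁻¹
            ≤ (C / Real.sqrt (η |x|)) * (cusponKernel u₀ (η |x|))⁻¹ := by gcongr
          _ = _ := by field_simp
    intro x
    refine ⟨Ioc (-(|x| + 1)) (|x| + 1), Ioc_mem_nhds ?_ ?_, ?_⟩
    · linarith [neg_abs_le x]
    · linarith [le_abs_self x]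
    · have hle : -(|x| + 1) ≤ |x| + 1 := by linarith [abs_nonneg x]
      rw [← intervalIntegrable_iff_integrableOn_Ioc_of_le hle]
      refine intervalIntegrable_of_even (fun y => ?_) hpos
      rw [abs_neg, neg_div, neg_mul, neg_sq]
end

section
/- Let 0 < u₀ < u₁ and set F = u₀u₁(u₀ + u₁)/6, S = (u₀² + u₀u₁ + u₁²)/6. Then the integral x_* := ∫₀^{u₀} ( 3v / ((u₀ − v)(u₁ − v)(u₀ + u₁ + v)) )^{1/2} dv is finite, and the function H(η) := ∫₀^η ( 3v / ((u₀ − v)(u₁ − v)(u₀ + u₁ + v)) )^{1/2} dv is a strictly increasing continuous bijection from [0,u₀] onto [0,x_*]; its inverse η : [0,x_*] → [0,u₀] is C¹ on (0,x_*) and satisfies ½ η(x) η'(x)² = F − S η(x) + η(x)³/6 for all x ∈ (0,x_*), with η(0) = 0 and η(x_*) = u₀. -/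
/-!
The integrand factors as `(u₀ - v)^(-1/2) * g v` with `g` continuous on `[0, u₀]`, because the factors
`u₁ - v` and `u₀ + u₁ + v` are bounded away from zero there; the only singularity is an integrable
inverse square root. Since the integrand `f` is positive and continuous on `(0, u₀)`, its primitive `H`
is continuous and strictly increasing on `[0, u₀]`, with `H' = f ≠ 0` inside, and the intermediate
value theorem makes it a bijection onto `[0, H u₀]`. The one-dimensional inverse function theorem then
gives `η' = 1 / f(η)`, and squaring this is the ODE, because
`F - S y + y³/6 = (u₀ - y)(u₁ - y)(u₀ + u₁ + y)/6`.
-/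

open Set Filter MeasureTheory

/-- The profile integrand has an integrable inverse-square-root singularity at `u₀`. -/
lemma cuspon_integrable (u₀ u₁ : ℝ) (h0 : 0 < u₀) (h01 : u₀ < u₁) :
    IntervalIntegrable
      (fun v : ℝ => Real.sqrt (3 * v / ((u₀ - v) * (u₁ - v) * (u₀ + u₁ + v)))) volume 0 u₀ := by
  have h1 : IntervalIntegrable (fun v : ℝ => (u₀ - v) ^ (-(1 / 2) : ℝ)) volume 0 u₀ := by
    have h := (intervalIntegral.intervalIntegrable_rpow' (a := 0) (b := u₀)
      (r := (-(1 / 2) : ℝ)) (by norm_num)).comp_sub_left u₀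
    simpa using h.symm
  have h2 : ContinuousOn (fun v : ℝ => Real.sqrt (3 * v / ((u₁ - v) * (u₀ + u₁ + v))))
      (uIcc 0 u₀) := by
    rw [uIcc_of_le h0.le]
    apply ContinuousOn.sqrt
    apply ContinuousOn.div (by fun_prop) (by fun_prop)
    intro v hv
    have := hv.1
    have := hv.2
    exact (mul_pos (by linarith) (by linarith)).ne'
  refine (h1.mul_continuousOn h2).congr ?_
  intro v hv
  rw [uIoc_of_le h0.le] at hv
  have hv' : 0 ≤ u₀ - v := by linarith [hv.2]
  -- At `v = u₀` both sides vanish, by the conventions for division by zero and `0 ^ (-1/2)`.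
  show (u₀ - v) ^ (-(1 / 2) : ℝ) * Real.sqrt (3 * v / ((u₁ - v) * (u₀ + u₁ + v))) =
    Real.sqrt (3 * v / ((u₀ - v) * (u₁ - v) * (u₀ + u₁ + v)))
  rw [Real.rpow_neg hv', ← Real.sqrt_eq_rpow, ← Real.sqrt_inv,
    ← Real.sqrt_mul (inv_nonneg.2 hv')]
  congr 1
  simp only [div_eq_mul_inv, mul_inv]
  ring

/-- **The periodic cuspon half-profile** (Section 6, case `0 < 3|F| < (2S)^{3/2}`): for
`0 < u₀ < u₁`, with `F = u₀u₁(u₀+u₁)/6` and `S = (u₀² + u₀u₁ + u₁²)/6`, the integrand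
`f(v) = √(3v/((u₀−v)(u₁−v)(u₀+u₁+v)))` is integrable on `[0,u₀]` (so `x_* = H(u₀)` is
finite, where `H(η) = ∫₀^η f`), `H` is a strictly increasing continuous bijection from
`[0,u₀]` onto `[0,x_*]`, and its inverse `η` is `C¹` on `(0,x_*)` and satisfies the
traveling-wave ODE `½ηη'² = F − Sη + η³/6`, with `η(0) = 0` and `η(x_*) = u₀`. -/
theorem periodic_cuspon_profile (u₀ u₁ : ℝ) (h0 : 0 < u₀) (h01 : u₀ < u₁)
    (F S : ℝ) (hF : F = u₀ * u₁ * (u₀ + u₁) / 6)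
    (hS : S = (u₀ ^ 2 + u₀ * u₁ + u₁ ^ 2) / 6)
    (f H : ℝ → ℝ)
    (hf : ∀ v : ℝ, f v = Real.sqrt (3 * v / ((u₀ - v) * (u₁ - v) * (u₀ + u₁ + v))))
    (hH : ∀ y : ℝ, H y = ∫ v in (0 : ℝ)..y, f v) :
    IntervalIntegrable f MeasureTheory.volume 0 u₀ ∧
    StrictMonoOn H (Set.Icc 0 u₀) ∧ ContinuousOn H (Set.Icc 0 u₀) ∧
    Set.BijOn H (Set.Icc 0 u₀) (Set.Icc 0 (H u₀)) ∧
    ∃ η η' : ℝ → ℝ,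
      (∀ s ∈ Set.Icc (0 : ℝ) (H u₀), η s ∈ Set.Icc 0 u₀ ∧ H (η s) = s) ∧
      (∀ x ∈ Set.Ioo (0 : ℝ) (H u₀), HasDerivAt η (η' x) x) ∧
      ContinuousOn η' (Set.Ioo 0 (H u₀)) ∧
      (∀ x ∈ Set.Ioo (0 : ℝ) (H u₀), η x * η' x ^ 2 / 2 = F - S * η x + η x ^ 3 / 6) ∧
      η 0 = 0 ∧ η (H u₀) = u₀ := by
  have hquot : ∀ v ∈ Ioo 0 u₀, 0 < (u₀ - v) * (u₁ - v) * (u₀ + u₁ + v) := by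
    intro v hv
    have := hv.1
    have := hv.2
    exact mul_pos (mul_pos (by linarith) (by linarith)) (by linarith)
  have hfpos : ∀ v ∈ Ioo 0 u₀, 0 < f v := by
    intro v hv
    rw [hf]
    exact Real.sqrt_pos.2 (div_pos (by linarith [hv.1]) (hquot v hv))
  have hfc : ContinuousOn f (Ioo 0 u₀) := by
    rw [show f = _ from funext hf]
    apply ContinuousOn.sqrt
    apply ContinuousOn.div (by fun_prop) (by fun_prop)
    exact fun v hv => (hquot v hv).ne'
  have hint : IntervalIntegrable f volume 0 u₀ := by
    rw [show f = _ from funext hf]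
    exact cuspon_integrable u₀ u₁ h0 h01
  have hsub : ∀ a ∈ Icc 0 u₀, ∀ b ∈ Icc 0 u₀, IntervalIntegrable f volume a b := by
    intro a ha b hb
    apply hint.mono_set
    rw [uIcc_of_le h0.le]
    exact (convex_Icc 0 u₀).ordConnected.uIcc_subset ha hb
  have hz : (0 : ℝ) ∈ Icc 0 u₀ := left_mem_Icc.2 h0.le
  have hu : u₀ ∈ Icc 0 u₀ := right_mem_Icc.2 h0.le
  have hmono : StrictMonoOn H (Icc 0 u₀) := by
    intro a ha b hb hab
    have hpos : 0 < ∫ v in a..b, f v :=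
      intervalIntegral.intervalIntegral_pos_of_pos_on (hsub a ha b hb)
        (fun v hv => hfpos v ⟨ha.1.trans_lt hv.1, hv.2.trans_le hb.2⟩) hab
    have hadd := intervalIntegral.integral_add_adjacent_intervals (hsub 0 hz a ha) (hsub a ha b hb)
    rw [hH, hH]
    linarith
  have hcont : ContinuousOn H (Icc 0 u₀) := by
    rw [show H = _ from funext hH, ← uIcc_of_le h0.le]
    apply intervalIntegral.continuousOn_primitive_interval
    rw [uIcc_of_le h0.le]
    exact (intervalIntegrable_iff_integrableOn_Icc_of_le h0.le).1 hint
  have hH0 : H 0 = 0 := by simp [hH]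
  have hbij : BijOn H (Icc 0 u₀) (Icc 0 (H u₀)) := by
    refine ⟨fun y hy => ⟨?_, hmono.monotoneOn hy hu hy.2⟩, hmono.injOn, ?_⟩
    · rw [← hH0]
      exact hmono.monotoneOn hz hy hy.1
    · have h := intermediate_value_Icc h0.le hcont
      rwa [hH0] at h
  have hderiv : ∀ y ∈ Ioo 0 u₀, HasDerivAt H (f y) y := by
    intro y hy
    rw [show H = _ from funext hH]
    exact intervalIntegral.integral_hasDerivAt_right (hsub 0 hz y (Ioo_subset_Icc_self hy))
      (hfc.stronglyMeasurableAtFilter isOpen_Ioo y hy) (hfc.continuousAt (isOpen_Ioo.mem_nhds hy))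
  refine ⟨hint, hmono, hcont, hbij, ?_⟩
  let η := Function.invFunOn H (Icc 0 u₀)
  have hη : InvOn η H (Icc 0 u₀) (Icc 0 (H u₀)) := hbij.invOn_invFunOn
  have hηmem : ∀ s ∈ Icc 0 (H u₀), η s ∈ Icc 0 u₀ := hbij.surjOn.mapsTo_invFunOn
  have hη0 : η 0 = 0 := by
    have h := hη.1 hz
    rwa [hH0] at h
  have hηu : η (H u₀) = u₀ := hη.1 hu
  have hηmono : StrictMonoOn η (Icc 0 (H u₀)) := by
    intro s hs t ht hst
    rw [← hmono.lt_iff_lt (hηmem s hs) (hηmem t ht), hη.2 hs, hη.2 ht]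
    exact hst
  have hηIoo : ∀ x ∈ Ioo 0 (H u₀), η x ∈ Ioo 0 u₀ := by
    intro x hx
    have hx' := Ioo_subset_Icc_self hx
    have hle := hx.1.le.trans hx.2.le
    refine ⟨?_, ?_⟩
    · simpa only [hη0] using hηmono (left_mem_Icc.2 hle) hx' hx.1
    · simpa only [hηu] using hηmono hx' (right_mem_Icc.2 hle) hx.2
  -- A monotone function whose image is a neighbourhood of its value has no jump.
  have hηc : ∀ x ∈ Ioo 0 (H u₀), ContinuousAt η x := by
    intro x hx
    refine hηmono.continuousAt_of_image_mem_nhds (Icc_mem_nhds hx.1 hx.2) ?_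
    refine mem_of_superset (Icc_mem_nhds (hηIoo x hx).1 (hηIoo x hx).2) ?_
    exact fun y hy => ⟨H y, hbij.mapsTo hy, hη.1 hy⟩
  refine ⟨η, fun x => (f (η x))⁻¹, fun s hs => ⟨hηmem s hs, hη.2 hs⟩, ?_, ?_, ?_, hη0, hηu⟩
  · intro x hx
    refine (hderiv _ (hηIoo x hx)).of_local_left_inverse (hηc x hx) (hfpos _ (hηIoo x hx)).ne' ?_
    filter_upwards [Icc_mem_nhds hx.1 hx.2] with s hs using hη.2 hs
  · apply ContinuousOn.inv₀
    · exact hfc.comp (fun x hx => (hηc x hx).continuousWithinAt) hηIoo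
    · exact fun x hx => (hfpos _ (hηIoo x hx)).ne'
  · intro x hx
    have hy := hηIoo x hx
    show η x * (f (η x))⁻¹ ^ 2 / 2 = F - S * η x + η x ^ 3 / 6
    generalize η x = y at hy ⊢
    have hq := hquot y hy
    have hy0 : y ≠ 0 := hy.1.ne'
    rw [inv_pow, hf, Real.sq_sqrt (div_nonneg (by linarith [hy.1]) hq.le), inv_div, hF, hS]
    have hcancel : ∀ p : ℝ, y * (p / (3 * y)) / 2 = p / 6 := by
      intro p
      field_simp
      ring
    rw [hcancel]
    ring
end

section
/- Let u₀ > 0 and let η : [0,∞) → [0,u₀) be the cuspon profile, i.e. the inverse of H(η) = ∫₀^η (3v/(2u₀ + v))^{1/2} dv/(u₀ − v). Define u(x) := −sgn(x) · η(|x|) for x ≠ 0 and u(0) := 0. Then u is continuous on ℝ, odd, non-increasing on ℝ, C² on ℝ∖{0}, satisfies u(x) → u₀ as x → −∞ and u(x) → −u₀ as x → +∞, and on ℝ∖{0} the stationary momentum flux is constant: ½ u² − u u'' − ½ (u')² = ½ u₀², while the energy flux ⅓ u³ − u² u'' equals u₀³/3 for x < 0 and −u₀³/3 for x > 0; in particular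 the energy flux decreases by (2/3)u₀³ across the singular point x = 0. -/
open Set Filter

/-!
With `f v = √(3v/(2u₀+v))/(u₀-v)`, the function `H` is strictly increasing on `[0, u₀)` with
derivative `f` there, so `η` is strictly increasing from `[0, ∞)` onto `[0, u₀)`. Put `v = -u`, the
odd extension of `η`: it is monotone with range `(-u₀, u₀)`. A monotone function with an open
interval as range is continuous, and its limits at `±∞` are the ends of that interval, so no
estimate of `H` near `u₀` is needed.

For `x > 0` the inverse function rule gives `v' = 1 / f(v) = √(q(v))` with
`q(y) = 2u₀³/(3y) - u₀² + y²/3 = (u₀ - y)²(2u₀ + y)/(3y)`, which is the first integral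
`½u(u')² = F - Su + u³/6` for `S = u₀²/2`, `|F| = u₀³/3`. Differentiating `√(q(v))` along the flow
gives `v'' = q'(v)/2 = (v³ - u₀³)/(3v²)`. Oddness carries these formulas over to `x < 0`, and both
flux identities become algebra in `v`.
-/

namespace ShockLayer

/-- The integrand defining `H`. -/
noncomputable def integrand (u₀ v : ℝ) : ℝ := Real.sqrt (3 * v / (2 * u₀ + v)) / (u₀ - v)

/-- The square of the slope of the profile, as a function of its height `y`. -/
noncomputable def slopeSq (u₀ y : ℝ) : ℝ := 2 * u₀ ^ 3 / (3 * y) - u₀ ^ 2 + y ^ 2 / 3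

/-- The second derivative of the profile, as a function of its height `y`;
this is half the derivative of `slopeSq u₀`. -/
noncomputable def curv (u₀ y : ℝ) : ℝ := (y ^ 3 - u₀ ^ 3) / (3 * y ^ 2)

lemma continuousOn_integrand {u₀ : ℝ} :
    ContinuousOn (integrand u₀) (Ioo (-(2 * u₀)) u₀) := by
  unfold integrand
  refine ContinuousOn.div (ContinuousOn.sqrt (ContinuousOn.div (by fun_prop) (by fun_prop) ?_))
    (by fun_prop) ?_
  · intro x hx; linarith [hx.1]
  · intro x hx; linarith [hx.2]

lemma integrand_pos {u₀ y : ℝ} (h0 : 0 < y) (h1 : y < u₀) : 0 < integrand u₀ y := by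
  have : 0 < u₀ - y := by linarith
  have : 0 < 2 * u₀ + y := by linarith
  unfold integrand
  positivity

lemma slopeSq_eq {u₀ y : ℝ} (h0 : 0 < y) :
    slopeSq u₀ y = (u₀ - y) ^ 2 * ((2 * u₀ + y) / (3 * y)) := by
  unfold slopeSq
  field_simp
  ring

lemma slopeSq_pos {u₀ y : ℝ} (h0 : 0 < y) (h1 : y < u₀) : 0 < slopeSq u₀ y := by
  have : 0 < u₀ - y := by linarith
  have : 0 < 2 * u₀ + y := by linarith
  rw [slopeSq_eq h0]
  positivity

lemma inv_integrand {u₀ y : ℝ} (h0 : 0 < y) (h1 : y < u₀) :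
    (integrand u₀ y)⁻¹ = Real.sqrt (slopeSq u₀ y) := by
  have h : 0 ≤ u₀ - y := by linarith
  rw [slopeSq_eq h0, Real.sqrt_mul (sq_nonneg _), Real.sqrt_sq h, integrand, inv_div,
    div_eq_mul_inv, ← Real.sqrt_inv, inv_div]

lemma hasDerivAt_slopeSq {u₀ y : ℝ} (h0 : 0 < y) :
    HasDerivAt (slopeSq u₀) (2 * curv u₀ y) y := by
  have h := (((hasDerivAt_inv h0.ne').const_mul (2 * u₀ ^ 3 / 3)).sub_const (u₀ ^ 2)).add
    (((hasDerivAt_id y).pow 2).div_const 3)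
  refine (h.congr_deriv ?_).congr_of_eventuallyEq ?_
  · unfold curv
    simp
    field_simp
    ring
  · filter_upwards [eventually_gt_nhds h0] with z hz
    simp [slopeSq]
    field_simp

section H

variable {u₀ : ℝ} {H : ℝ → ℝ}

lemma hasDerivAt_H (hH : ∀ y : ℝ, H y = ∫ v in (0 : ℝ)..y, integrand u₀ v)
    {y : ℝ} (hy : y ∈ Ico 0 u₀) : HasDerivAt H (integrand u₀ y) y := by
  have hy' : y ∈ Ioo (-(2 * u₀)) u₀ := ⟨by linarith [hy.1, hy.2], hy.2⟩
  rw [funext hH]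
  refine intervalIntegral.integral_hasDerivAt_right ?_
    (continuousOn_integrand.stronglyMeasurableAtFilter isOpen_Ioo y hy')
    (continuousOn_integrand.continuousAt (isOpen_Ioo.mem_nhds hy'))
  refine (continuousOn_integrand.mono ?_).intervalIntegrable
  rw [uIcc_of_le hy.1]
  intro z hz
  exact ⟨by linarith [hz.1, hy.1, hy.2], lt_of_le_of_lt hz.2 hy.2⟩

lemma strictMonoOn_H (hH : ∀ y : ℝ, H y = ∫ v in (0 : ℝ)..y, integrand u₀ v) :
    StrictMonoOn H (Ico 0 u₀) := by
  refine strictMonoOn_of_deriv_pos (convex_Ico 0 u₀)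
    (fun y hy => (hasDerivAt_H hH hy).continuousAt.continuousWithinAt) ?_
  rw [interior_Ico]
  intro y hy
  rw [(hasDerivAt_H hH (Ioo_subset_Ico_self hy)).deriv]
  exact integrand_pos hy.1 hy.2

end H

/-- Along a positive solution of `g' = √(slopeSq u₀ g)`, the slope has derivative `curv u₀ g`. -/
lemma hasDerivAt_slope {u₀ x : ℝ} {g : ℝ → ℝ} (h0 : 0 < g x) (h1 : g x < u₀)
    (hg : HasDerivAt g (Real.sqrt (slopeSq u₀ (g x))) x) :
    HasDerivAt (fun t => Real.sqrt (slopeSq u₀ (g t))) (curv u₀ (g x)) x := by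
  have hq := slopeSq_pos h0 h1
  refine (((hasDerivAt_slopeSq h0).comp x hg).sqrt hq.ne').congr_deriv ?_
  have := Real.sqrt_pos.2 hq
  simp only [Function.comp]
  field_simp

end ShockLayer

open ShockLayer

/-- **The weakly singular shock layer** (Section 6): with `η` the cuspon profile (the
inverse of `H(η) = ∫₀^η √(3v/(2u₀+v)) dv/(u₀−v)` on `[0,∞)`), the odd extension
`u(x) = −sgn(x) η(|x|)` is continuous, odd, non-increasing, `C²` away from `0`, tends to
`±u₀` as `x → ∓∞`, has constant momentum flux `½u² − uu'' − ½u'² = ½u₀²` on `ℝ∖{0}`,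
and its energy flux `⅓u³ − u²u''` equals `u₀³/3` for `x < 0` and `−u₀³/3` for `x > 0`,
so the energy flux drops by `(2/3)u₀³` across the singular point. -/
theorem shock_layer (u₀ : ℝ) (hu₀ : 0 < u₀) (H η : ℝ → ℝ)
    (hH : ∀ y : ℝ, H y = ∫ v in (0 : ℝ)..y, Real.sqrt (3 * v / (2 * u₀ + v)) / (u₀ - v))
    (hη : ∀ s : ℝ, 0 ≤ s → η s ∈ Set.Ico 0 u₀ ∧ H (η s) = s)
    (u : ℝ → ℝ) (hu : ∀ x : ℝ, u x = -Real.sign x * η |x|) :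
    Continuous u ∧ (∀ x : ℝ, u (-x) = -u x) ∧ Antitone u ∧
    ∃ u' u'' : ℝ → ℝ,
      (∀ x : ℝ, x ≠ 0 → HasDerivAt u (u' x) x) ∧
      (∀ x : ℝ, x ≠ 0 → HasDerivAt u' (u'' x) x) ∧
      ContinuousOn u' {x : ℝ | x ≠ 0} ∧ ContinuousOn u'' {x : ℝ | x ≠ 0} ∧
      Filter.Tendsto u Filter.atBot (nhds u₀) ∧
      Filter.Tendsto u Filter.atTop (nhds (-u₀)) ∧
      (∀ x : ℝ, x ≠ 0 →
        u x ^ 2 / 2 - u x * u'' x - u' x ^ 2 / 2 = u₀ ^ 2 / 2) ∧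
      (∀ x : ℝ, x < 0 → u x ^ 3 / 3 - u x ^ 2 * u'' x = u₀ ^ 3 / 3) ∧
      (∀ x : ℝ, 0 < x → u x ^ 3 / 3 - u x ^ 2 * u'' x = -(u₀ ^ 3 / 3)) := by
  change ∀ y : ℝ, H y = ∫ v in (0 : ℝ)..y, integrand u₀ v at hH
  have hmono := strictMonoOn_H hH
  have h0mem : (0 : ℝ) ∈ Ico 0 u₀ := ⟨le_rfl, hu₀⟩
  have hH0 : H 0 = 0 := by simp [hH]
  have hη0 : η 0 = 0 :=
    hmono.injOn (hη 0 le_rfl).1 h0mem (by rw [(hη 0 le_rfl).2, hH0])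
  have hηmono : StrictMonoOn η (Ici 0) := by
    intro a ha b hb hab
    rwa [← hmono.lt_iff_lt (hη a ha).1 (hη b hb).1, (hη a ha).2, (hη b hb).2]
  have hηsurj : ∀ y ∈ Ico 0 u₀, ∃ s, 0 ≤ s ∧ η s = y := by
    intro y hy
    have hs : 0 ≤ H y := by
      rw [← hH0]
      exact hmono.monotoneOn h0mem hy hy.1
    exact ⟨H y, hs, hmono.injOn (hη _ hs).1 hy (hη _ hs).2⟩
  obtain ⟨v, hv⟩ : ∃ v : ℝ → ℝ, ∀ x, v x = -u x := ⟨fun x => -u x, fun _ => rfl⟩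
  have huv : u = fun x => -v x := by
    funext x
    simp [hv]
  have hvη : ∀ x, 0 ≤ x → v x = η x := by
    intro x hx
    rcases hx.eq_or_lt with rfl | hx
    · simp [hv, hu, hη0]
    · simp [hv, hu, Real.sign_of_pos hx, abs_of_pos hx]
  have hodd : ∀ x, v (-x) = -v x := by
    intro x
    simp [hv, hu, Real.sign_neg]
  have hvmono : Monotone v := by
    refine monotone_of_odd_of_monotoneOn_nonneg hodd ?_
    intro a ha b hb hab
    rw [hvη a ha, hvη b hb]
    exact hηmono.monotoneOn ha hb hab
  have hrange : range v = Ioo (-u₀) u₀ := by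
    ext y
    constructor
    · rintro ⟨x, rfl⟩
      rcases le_total 0 x with hx | hx
      · have := (hη x hx).1
        rw [hvη x hx]
        exact ⟨by linarith [this.1], this.2⟩
      · have := (hη (-x) (by linarith)).1
        rw [← hvη _ (by linarith), hodd] at this
        exact ⟨by linarith [this.2], by linarith [this.1]⟩
    · rintro ⟨h1, h2⟩
      rcases le_total 0 y with hy | hy
      · obtain ⟨s, hs, rfl⟩ := hηsurj y ⟨hy, h2⟩
        exact ⟨s, hvη s hs⟩
      · obtain ⟨s, hs, hsy⟩ := hηsurj (-y) ⟨by linarith, by linarith⟩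
        exact ⟨-s, by rw [hodd, hvη s hs, hsy, neg_neg]⟩
  have hvcont : Continuous v := by
    refine continuous_iff_continuousAt.2 fun x =>
      continuousAt_of_monotoneOn_of_image_mem_nhds (hvmono.monotoneOn univ) univ_mem ?_
    rw [image_univ, hrange]
    exact isOpen_Ioo.mem_nhds (hrange ▸ mem_range_self x)
  have hvpos : ∀ x, 0 < x → 0 < v x := by
    intro x hx
    rw [hvη x hx.le, ← hη0]
    exact hηmono self_mem_Ici hx.le hx
  have hvneg : ∀ x, x < 0 → v x < 0 := by
    intro x hx
    have := hvpos (-x) (by linarith)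
    rw [hodd] at this
    linarith
  have hvlt : ∀ x, v x < u₀ := fun x => (hrange ▸ mem_range_self x : v x ∈ Ioo (-u₀) u₀).2
  have hvne : ∀ x, x ≠ 0 → v x ≠ 0 := fun x hx =>
    hx.lt_or_gt.elim (fun h => (hvneg x h).ne) (fun h => (hvpos x h).ne')
  obtain ⟨V₁, hV₁⟩ : ∃ V₁ : ℝ → ℝ, ∀ x, V₁ x = Real.sqrt (slopeSq u₀ |v x|) :=
    ⟨_, fun _ => rfl⟩
  obtain ⟨V₂, hV₂⟩ : ∃ V₂ : ℝ → ℝ, ∀ x, V₂ x = Real.sign x * curv u₀ |v x| :=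
    ⟨_, fun _ => rfl⟩
  have hV₁even : ∀ x, V₁ (-x) = V₁ x := by
    intro x
    simp [hV₁, hodd]
  have hV₂odd : ∀ x, V₂ (-x) = -V₂ x := by
    intro x
    simp [hV₂, hodd, Real.sign_neg]
  have hd₁pos : ∀ x, 0 < x → HasDerivAt v (V₁ x) x := by
    intro x hx
    rw [hV₁, abs_of_pos (hvpos x hx), ← inv_integrand (hvpos x hx) (hvlt x)]
    refine HasDerivAt.of_local_left_inverse hvcont.continuousAt
      (hasDerivAt_H hH ⟨(hvpos x hx).le, hvlt x⟩)
      (integrand_pos (hvpos x hx) (hvlt x)).ne' ?_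
    filter_upwards [eventually_gt_nhds hx] with z hz
    rw [hvη z hz.le, (hη z hz.le).2]
  have hd₂pos : ∀ x, 0 < x → HasDerivAt V₁ (V₂ x) x := by
    intro x hx
    have h := hd₁pos x hx
    rw [hV₁, abs_of_pos (hvpos x hx)] at h
    have h' := hasDerivAt_slope (hvpos x hx) (hvlt x) h
    rw [hV₂, Real.sign_of_pos hx, one_mul, abs_of_pos (hvpos x hx)]
    refine h'.congr_of_eventuallyEq ?_
    filter_upwards [eventually_gt_nhds hx] with z hz
    rw [hV₁, abs_of_pos (hvpos z hz)]
  have hd₁ : ∀ x, x ≠ 0 → HasDerivAt v (V₁ x) x := by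
    intro x hx
    rcases hx.lt_or_gt with hx | hx
    · have h := ((hd₁pos (-x) (by linarith)).comp x (hasDerivAt_neg x)).neg
      refine (h.congr_deriv (by rw [hV₁even]; ring)).congr_of_eventuallyEq
        (Eventually.of_forall fun z => ?_)
      simp [hodd]
    · exact hd₁pos x hx
  have hd₂ : ∀ x, x ≠ 0 → HasDerivAt V₁ (V₂ x) x := by
    intro x hx
    rcases hx.lt_or_gt with hx | hx
    · have h := (hd₂pos (-x) (by linarith)).comp x (hasDerivAt_neg x)
      refine (h.congr_deriv (by rw [hV₂odd]; ring)).congr_of_eventuallyEq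
        (Eventually.of_forall fun z => ?_)
      simp [hV₁even]
    · exact hd₂pos x hx
  have hV₂cont : ∀ x, x ≠ 0 → ContinuousAt V₂ x := by
    intro x hx
    have hsign : ContinuousAt Real.sign x := by
      rcases hx.lt_or_gt with hx | hx
      · refine (continuousAt_const (y := (-1 : ℝ))).congr ?_
        filter_upwards [eventually_lt_nhds hx] with z hz
        rw [Real.sign_of_neg hz]
      · refine (continuousAt_const (y := (1 : ℝ))).congr ?_
        filter_upwards [eventually_gt_nhds hx] with z hz
        rw [Real.sign_of_pos hz]
    have hvx := abs_pos.2 (hvne x hx)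
    rw [funext hV₂]
    unfold curv
    refine hsign.mul (ContinuousAt.div (by fun_prop) (by fun_prop) ?_)
    positivity
  have htop : Tendsto v atTop (nhds u₀) :=
    tendsto_atTop_isLUB hvmono (hrange ▸ isLUB_Ioo (by linarith))
  have hbot : Tendsto v atBot (nhds (-u₀)) :=
    tendsto_atBot_isGLB hvmono (hrange ▸ isGLB_Ioo (by linarith))
  -- The energy-flux identity for `v`, cleared of the denominator `v ^ 2`.
  have hflux : ∀ x, x ≠ 0 → v x ^ 2 * V₂ x = (v x ^ 3 - Real.sign x * u₀ ^ 3) / 3 := by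
    intro x hx
    have hne := hvne x hx
    rw [hV₂, curv]
    rcases hx.lt_or_gt with hx | hx
    · rw [Real.sign_of_neg hx, abs_of_neg (hvneg x hx)]
      field_simp
      ring
    · rw [Real.sign_of_pos hx, abs_of_pos (hvpos x hx)]
      field_simp
  subst huv
  refine ⟨hvcont.neg, fun x => by simp [hodd], hvmono.neg, fun x => -V₁ x, fun x => -V₂ x,
    fun x hx => (hd₁ x hx).neg, fun x hx => (hd₂ x hx).neg,
    fun x hx => (hd₂ x hx).continuousAt.neg.continuousWithinAt,
    fun x hx => (hV₂cont x hx).neg.continuousWithinAt,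
    by simpa using hbot.neg, htop.neg, ?_, ?_, ?_⟩
  · intro x hx
    have hvx := abs_pos.2 (hvne x hx)
    have hvx' : |v x| < u₀ := abs_lt.2 (hrange ▸ mem_range_self x : v x ∈ Ioo (-u₀) u₀)
    have hsq : V₁ x ^ 2 = slopeSq u₀ |v x| := by
      rw [hV₁, Real.sq_sqrt (slopeSq_pos hvx hvx').le]
    have hprod : v x * V₂ x = |v x| * curv u₀ |v x| := by
      rw [hV₂]
      rcases hx.lt_or_gt with hx | hx
      · rw [Real.sign_of_neg hx, abs_of_neg (hvneg x hx)]
        ring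
      · rw [Real.sign_of_pos hx, abs_of_pos (hvpos x hx)]
        ring
    have habs : v x ^ 2 = |v x| ^ 2 := (sq_abs _).symm
    simp only [neg_sq, neg_mul_neg]
    rw [hsq, hprod, habs]
    unfold slopeSq curv
    field_simp
    ring
  · intro x hx
    have h := hflux x hx.ne
    rw [Real.sign_of_neg hx] at h
    linear_combination h
  · intro x hx
    have h := hflux x hx.ne'
    rw [Real.sign_of_pos hx] at h
    linear_combination h
end

section
/- Let F > 0, S ∈ ℝ, x₀ ∈ ℝ, δ > 0, and let u : (x₀, x₀ + δ) → ℝ be C¹ with u > 0 on (x₀, x₀ + δ), u(x) → 0 as x → x₀⁺, and ½ u(x) u'(x)² = F − S u(x) + u(x)³/6 for all x ∈ (x₀, x₀ + δ). Then u(x) / ( (3/2) √(2F) · (x − x₀) )^{2/3} → 1 as x → x₀⁺. In particular u'(x)² = O((x − x₀)^{−2/3}), so (u')² is integrable near x₀. -/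
/-!
Since `F > 0` and `u → 0`, the right-hand side `F − Su + u³/6` is positive near `x₀`, so `u'` has
no zero there and hence a constant sign; the sign is positive because a decreasing positive
function cannot tend to `0` at the left endpoint. Thus `W = u^{3/2}` satisfies
`W' = (3/2) √(2 (F − Su + u³/6)) → c := (3/2) √(2F)`, and extending `W` by `0` at `x₀` gives a
function with right derivative `c` at `x₀`. Therefore `W(x) / (c (x − x₀)) → 1`, and the power
`2/3` of this is the asymptotics of `u`. The bound on `u'²` is read off from
`u'² = 2 (F − Su + u³/6) / u`, and `(x − x₀)^{−2/3}` is integrable.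
-/

open Set Filter MeasureTheory Asymptotics

/-- If `u > 0` on `(a, b)` tends to `0` at `a` and its derivative has no zero, then that derivative
is positive, since it has constant sign and a decreasing `u` would stay away from `0` near `a`. -/
lemma deriv_pos_of_tendsto_zero {a b : ℝ} (hab : a < b) {u u' : ℝ → ℝ}
    (hderiv : ∀ x ∈ Ioo a b, HasDerivAt u (u' x) x)
    (hpos : ∀ x ∈ Ioo a b, 0 < u x)
    (hlim : Tendsto u (nhdsWithin a (Ioi a)) (nhds 0))
    (hne : ∀ x ∈ Ioo a b, u' x ≠ 0) : ∀ x ∈ Ioo a b, 0 < u' x := by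
  rcases hasDerivWithinAt_forall_lt_or_forall_gt_of_forall_ne (convex_Ioo a b)
    (fun x hx => (hderiv x hx).hasDerivWithinAt) hne with h | h
  · exfalso
    have hanti : StrictAntiOn u (Ioo a b) := by
      apply strictAntiOn_of_deriv_neg (convex_Ioo a b)
      · exact fun x hx => (hderiv x hx).continuousAt.continuousWithinAt
      · intro x hx
        rw [interior_Ioo] at hx
        rw [(hderiv x hx).deriv]
        exact h x hx
    have hm : (a + b) / 2 ∈ Ioo a b := ⟨by linarith, by linarith⟩
    have hev : ∀ᶠ y in nhdsWithin a (Ioi a), u ((a + b) / 2) ≤ u y := by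
      filter_upwards [Ioo_mem_nhdsGT hm.1] with y hy
      exact (hanti ⟨hy.1, hy.2.trans hm.2⟩ hm hy.2).le
    have := ge_of_tendsto hlim hev
    linarith [hpos _ hm]
  · exact h

/-- The function `u^{3/2}` linearises the cusp: it leaves `0` with slope `(3/2) √(2F)`. -/
lemma tendsto_cusp_rpow_div (F S x₀ δ : ℝ) (hF : 0 < F) (hδ : 0 < δ)
    (u u' : ℝ → ℝ)
    (hderiv : ∀ x ∈ Ioo x₀ (x₀ + δ), HasDerivAt u (u' x) x)
    (hpos : ∀ x ∈ Ioo x₀ (x₀ + δ), 0 < u x)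
    (hlim : Tendsto u (nhdsWithin x₀ (Ioi x₀)) (nhds 0))
    (hode : ∀ x ∈ Ioo x₀ (x₀ + δ),
      u x * u' x ^ 2 / 2 = F - S * u x + u x ^ 3 / 6) :
    Tendsto (fun x => u x ^ ((3 : ℝ) / 2) / (x - x₀)) (nhdsWithin x₀ (Ioi x₀))
      (nhds ((3 / 2) * √(2 * F))) := by
  have hG : Tendsto (fun x => F - S * u x + u x ^ 3 / 6) (nhdsWithin x₀ (Ioi x₀)) (nhds F) := by
    have := ((hlim.const_mul S).const_sub F).add ((hlim.pow 3).div_const 6)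
    simpa using this
  obtain ⟨b, hb, hbG⟩ := (mem_nhdsGT_iff_exists_Ioo_subset' (lt_add_of_pos_right x₀ hδ)).1
    (inter_mem (hG.eventually (lt_mem_nhds hF)) (Ioo_mem_nhdsGT (lt_add_of_pos_right x₀ hδ)))
  have hb : x₀ < b := hb
  have hu'pos : ∀ x ∈ Ioo x₀ b, 0 < u' x := by
    refine deriv_pos_of_tendsto_zero hb (fun x hx => hderiv x (hbG hx).2)
      (fun x hx => hpos x (hbG hx).2) hlim ?_
    intro x hx h0
    have h1 := hode x (hbG hx).2
    have h2 : 0 < F - S * u x + u x ^ 3 / 6 := (hbG hx).1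
    rw [← h1, h0] at h2
    simp at h2
  -- The value `u x₀` is arbitrary, so `u^{3/2}` is redefined to vanish there.
  set W : ℝ → ℝ := fun x => if x ≤ x₀ then 0 else u x ^ ((3 : ℝ) / 2) with hW
  have hWeq : ∀ x, x₀ < x → W x = u x ^ ((3 : ℝ) / 2) := fun x hx => by
    simp [hW, not_le.2 hx]
  have hW0 : W x₀ = 0 := by simp [hW]
  have hWd : ∀ x ∈ Ioo x₀ b,
      HasDerivAt W ((3 / 2) * √(2 * (F - S * u x + u x ^ 3 / 6))) x := by
    intro x hx
    have hux := hpos x (hbG hx).2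
    have h1 := (hderiv x (hbG hx).2).rpow_const (p := (3 : ℝ) / 2) (Or.inl hux.ne')
    have h2 : HasDerivAt W (u' x * (3 / 2) * u x ^ ((3 : ℝ) / 2 - 1)) x := by
      refine h1.congr_of_eventuallyEq ?_
      filter_upwards [lt_mem_nhds hx.1] with y hy using hWeq y hy
    convert h2 using 1
    have h3 : 2 * (F - S * u x + u x ^ 3 / 6) = u x * u' x ^ 2 := by
      linarith [hode x (hbG hx).2]
    rw [h3, Real.sqrt_mul hux.le, Real.sqrt_sq (hu'pos x hx).le, Real.sqrt_eq_rpow]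
    norm_num
    ring
  have hright : HasDerivWithinAt W ((3 / 2) * √(2 * F)) (Ici x₀) x₀ := by
    refine hasDerivWithinAt_Ici_of_tendsto_deriv (s := Ioo x₀ b)
      (fun x hx => (hWd x hx).differentiableAt.differentiableWithinAt) ?_
      (Ioo_mem_nhdsGT hb) ?_
    · have h1 : Tendsto W (nhdsWithin x₀ (Ioi x₀)) (nhds (W x₀)) := by
        have h2 := hlim.rpow_const (p := (3 : ℝ) / 2) (Or.inr (by norm_num))
        rw [Real.zero_rpow (by norm_num)] at h2
        rw [hW0]
        refine h2.congr' ?_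
        filter_upwards [self_mem_nhdsWithin] with y hy using (hWeq y hy).symm
      exact h1.mono_left (nhdsWithin_mono _ Ioo_subset_Ioi_self)
    · have h1 := ((hG.const_mul 2).sqrt).const_mul (3 / 2)
      refine h1.congr' ?_
      filter_upwards [Ioo_mem_nhdsGT hb] with y hy using (hWd y hy).deriv.symm
  have hs := (hasDerivWithinAt_iff_tendsto_slope' self_notMem_Ioi).1
    (hright.mono Ioi_subset_Ici_self)
  refine hs.congr' ?_
  filter_upwards [self_mem_nhdsWithin] with y hy
  rw [slope_def_field, hW0, hWeq y hy, sub_zero]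

/-- **Local cusp asymptotics at a singular point** (equations (6.6)/(6.8)): if `u > 0`
solves the traveling-wave ODE `½uu'² = F − Su + u³/6` with `F > 0` on `(x₀, x₀+δ)` and
`u → 0` at `x₀⁺`, then `u(x) ∼ ((3/2)√(2F)(x−x₀))^{2/3}` as `x → x₀⁺`; in particular
`u'² = O((x−x₀)^{−2/3})`, so `(u')²` is integrable near `x₀`. -/
theorem cusp_asymptotics (F S x₀ δ : ℝ) (hF : 0 < F) (hδ : 0 < δ)
    (u u' : ℝ → ℝ)
    (hderiv : ∀ x ∈ Set.Ioo x₀ (x₀ + δ), HasDerivAt u (u' x) x)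
    (hc : ContinuousOn u' (Set.Ioo x₀ (x₀ + δ)))
    (hpos : ∀ x ∈ Set.Ioo x₀ (x₀ + δ), 0 < u x)
    (hlim : Filter.Tendsto u (nhdsWithin x₀ (Set.Ioi x₀)) (nhds 0))
    (hode : ∀ x ∈ Set.Ioo x₀ (x₀ + δ),
      u x * u' x ^ 2 / 2 = F - S * u x + u x ^ 3 / 6) :
    Filter.Tendsto
      (fun x => u x / ((3 / 2) * Real.sqrt (2 * F) * (x - x₀)) ^ ((2 : ℝ) / 3))
      (nhdsWithin x₀ (Set.Ioi x₀)) (nhds 1) ∧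
    (fun x => u' x ^ 2) =O[nhdsWithin x₀ (Set.Ioi x₀)]
      (fun x => (x - x₀) ^ (-(2 : ℝ) / 3)) ∧
    ∃ δ' : ℝ, 0 < δ' ∧ δ' ≤ δ ∧
      MeasureTheory.IntegrableOn (fun x => u' x ^ 2) (Set.Ioo x₀ (x₀ + δ')) := by
  have hI : Ioo x₀ (x₀ + δ) ∈ nhdsWithin x₀ (Ioi x₀) :=
    Ioo_mem_nhdsGT (lt_add_of_pos_right x₀ hδ)
  have hc0 : 0 < (3 / 2) * √(2 * F) := by positivity
  have key := tendsto_cusp_rpow_div F S x₀ δ hF hδ u u' hderiv hpos hlim hode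
  set c := (3 / 2) * √(2 * F) with hcdef
  have h1 : Tendsto (fun x => u x / (c * (x - x₀)) ^ ((2 : ℝ) / 3))
      (nhdsWithin x₀ (Ioi x₀)) (nhds 1) := by
    have h2 := (key.div_const c).rpow_const (p := (2 : ℝ) / 3) (Or.inr (by norm_num))
    rw [div_self hc0.ne', Real.one_rpow] at h2
    refine h2.congr' ?_
    filter_upwards [hI] with x hx
    have hx0 : 0 < x - x₀ := sub_pos.2 hx.1
    have hux := hpos x hx
    rw [div_div, mul_comm (x - x₀) c, Real.div_rpow (by positivity) (by positivity),
      ← Real.rpow_mul hux.le]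
    norm_num
  have hO : (fun x => u' x ^ 2) =O[nhdsWithin x₀ (Ioi x₀)]
      (fun x => (x - x₀) ^ (-(2 : ℝ) / 3)) := by
    have hG : Tendsto (fun x => 2 * (F - S * u x + u x ^ 3 / 6))
        (nhdsWithin x₀ (Ioi x₀)) (nhds (2 * F)) := by
      have := (((hlim.const_mul S).const_sub F).add ((hlim.pow 3).div_const 6)).const_mul 2
      simpa using this
    have h3 := (hG.div h1 one_ne_zero).div_const (c ^ ((2 : ℝ) / 3))
    refine isBigO_of_div_tendsto_nhds ?_ _ (h3.congr' ?_)
    · filter_upwards [hI] with x hx h0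
      exact absurd h0 (Real.rpow_pos_of_pos (sub_pos.2 hx.1) _).ne'
    · filter_upwards [hI] with x hx
      have hx0 : 0 < x - x₀ := sub_pos.2 hx.1
      have hux := hpos x hx
      have h4 : 2 * (F - S * u x + u x ^ 3 / 6) = u x * u' x ^ 2 := by
        linarith [hode x hx]
      have hp := Real.rpow_pos_of_pos hx0 ((2 : ℝ) / 3)
      have hq := Real.rpow_pos_of_pos hc0 ((2 : ℝ) / 3)
      simp only [Pi.div_apply]
      rw [h4, Real.mul_rpow hc0.le hx0.le, neg_div, Real.rpow_neg hx0.le]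
      field_simp
  refine ⟨h1, hO, ?_⟩
  obtain ⟨C, hC⟩ := hO.bound
  obtain ⟨b, hb, hbC⟩ := (mem_nhdsGT_iff_exists_Ioo_subset' (lt_add_of_pos_right x₀ hδ)).1
    (inter_mem hC hI)
  have hb : x₀ < b := hb
  have hsub : Ioo x₀ (x₀ + min δ (b - x₀)) ⊆ Ioo x₀ b :=
    Ioo_subset_Ioo_right (by linarith [min_le_right δ (b - x₀)])
  have hpos' : 0 < min δ (b - x₀) := lt_min hδ (sub_pos.2 hb)
  refine ⟨min δ (b - x₀), hpos', min_le_left _ _, ?_⟩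
  have hint : IntegrableOn (fun x => C * (x - x₀) ^ (-(2 : ℝ) / 3))
      (Ioo x₀ (x₀ + min δ (b - x₀))) := by
    have h5 : IntervalIntegrable (fun x : ℝ => x ^ (-(2 : ℝ) / 3)) volume
        0 (min δ (b - x₀)) := intervalIntegral.intervalIntegrable_rpow' (by norm_num)
    have h6 := (h5.comp_sub_right x₀).const_mul C
    rw [zero_add, add_comm _ x₀,
      intervalIntegrable_iff_integrableOn_Ioo_of_le (by linarith)] at h6
    exact h6
  refine Integrable.mono' hint ?_ ?_
  · exact ((hc.mono (fun x hx => (hbC (hsub hx)).2)).pow 2).aestronglyMeasurable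
      measurableSet_Ioo
  · filter_upwards [ae_restrict_mem measurableSet_Ioo] with x hx
    have h7 : ‖u' x ^ 2‖ ≤ C * ‖(x - x₀) ^ (-(2 : ℝ) / 3)‖ := (hbC (hsub hx)).1
    rwa [Real.norm_of_nonneg (Real.rpow_nonneg (sub_pos.2 hx.1).le _)] at h7
end
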